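/- arXiv:2402.13491 — 9 statements merged into one kernel-verified Lean document; each statement's English description precedes it below -/
import Mathlib

section
/- Let n be a finite type, let J : Matrix (n ⊕ n) (n ⊕ n) ℂ be the block matrix J = Matrix.fromBlocks 0 1 (-1) 0, and let M : Matrix (n ⊕ n) (n ⊕ n) ℂ be Hamiltonian, i.e. (J * M)ᴴ = J * M. Then the spectrum of M is symmetric with respect to the imaginary axis: for every λ ∈ ℂ, if λ ∈ spectrum ℂ M then -(starRingEnd ℂ λ) ∈ spectrum ℂ M. -/
open Matrix

/-!
A skew-adjoint unit `j` making `j * a` self-adjoint conjugates `a` to `-star a`, so these two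
elements have the same spectrum; the spectrum of `-star a` is that of `a` reflected by
`lam ↦ -star lam`.
-/

section StarAlgebra

variable {A : Type*} [Ring A] [StarRing A]

theorem conj_eq_neg_star_of_mem_skewAdjoint {u : Aˣ} {a : A} (hu : (u : A) ∈ skewAdjoint A)
    (ha : IsSelfAdjoint (u * a)) : u * a * ↑u⁻¹ = -star a := by
  rw [Units.mul_inv_eq_iff_eq_mul]
  calc
    (u : A) * a = star a * star (u : A) := by rw [← star_mul, ha.star_eq]
    _ = -star a * u := by rw [skewAdjoint.mem_iff.mp hu, mul_neg, neg_mul]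

theorem hamiltonian_spectrum_symmetric_general {R : Type*} [CommRing R] [InvolutiveStar R]
    [Algebra R A] [StarModule R A] {j a : A} (hj_unit : IsUnit j) (hj : j ∈ skewAdjoint A)
    (ha : IsSelfAdjoint (j * a)) {lam : R} (hlam : lam ∈ spectrum R a) :
    -star lam ∈ spectrum R a := by
  obtain ⟨u, rfl⟩ := hj_unit
  have h_spectrum : spectrum R a = -star (spectrum R a) := by
    rw [← spectrum.map_star, spectrum.neg_eq, ← conj_eq_neg_star_of_mem_skewAdjoint hj ha,
      spectrum.units_conjugate]
  rw [h_spectrum, Set.mem_neg, neg_neg, Set.star_mem_star]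
  exact hlam

end StarAlgebra

section CanonicalMatrix

variable (n R : Type*) [DecidableEq n] [CommRing R]

theorem fromBlocks_zero_one_neg_one_zero_eq_neg_J :
    (fromBlocks 0 1 (-1) 0 : Matrix (n ⊕ n) (n ⊕ n) R) = -Matrix.J n R := by
  rw [Matrix.J, fromBlocks_neg, neg_zero, neg_neg]

theorem J_mem_skewAdjoint [StarRing R] :
    Matrix.J n R ∈ skewAdjoint (Matrix (n ⊕ n) (n ⊕ n) R) := by
  rw [skewAdjoint.mem_iff]
  calc
    star (Matrix.J n R) = ((Matrix.J n R).map (starRingEnd R))ᵀ := rfl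
    _ = -Matrix.J n R := by rw [map_J, J_transpose]

theorem isUnit_J [Fintype n] : IsUnit (Matrix.J n R) :=
  (isUnit_iff_isUnit_det _).mpr (isUnit_det_J n R)

end CanonicalMatrix

theorem hamiltonian_spectrum_symmetric {n : Type*} [Fintype n] [DecidableEq n]
    (J M : Matrix (n ⊕ n) (n ⊕ n) ℂ)
    (hJ : J = Matrix.fromBlocks 0 1 (-1) 0)
    (hM : (J * M)ᴴ = J * M) :
    ∀ lam : ℂ, lam ∈ spectrum ℂ M → -(starRingEnd ℂ lam) ∈ spectrum ℂ M := by
  obtain rfl := hJ.trans (fromBlocks_zero_one_neg_one_zero_eq_neg_J n ℂ)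
  exact fun _ => hamiltonian_spectrum_symmetric_general (isUnit_J n ℂ).neg
    (neg_mem (J_mem_skewAdjoint n ℂ)) hM
end

section
/- Let n be a finite type, A G K : Matrix n n ℂ with G and K Hermitian, and set M = Matrix.fromBlocks A G K (-Aᴴ). Suppose λ ∈ ℂ and x y : n → ℂ satisfy M *ᵥ (Sum.elim x y) = λ • (Sum.elim x y). Then (star x) ⬝ᵥ (K *ᵥ x) + (star y) ⬝ᵥ (G *ᵥ y) = (λ + starRingEnd ℂ λ) * ((star x) ⬝ᵥ y). -/
/-!
Pair the second row of the matrix, applied to `(u, v)`, with `star x`, and the conjugate of the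
first row, applied to `(x, y)`, with `v`. The contributions of `-Aᴴ` and `A` cancel by
adjointness, so only the terms in `K` and `G` survive. For eigenvectors with eigenvalues `mu` and
`lam`, the two pairings are `mu * (star x ⬝ᵥ v)` and `star lam * (star x ⬝ᵥ v)`.
-/

open Matrix

section

variable {m n R : Type*} [Fintype m] [Fintype n]

theorem star_mulVec_dotProduct
    [NonUnitalSemiring R] [StarRing R] (A : Matrix m n R) (x : n → R) (v : m → R) :
    star (A *ᵥ x) ⬝ᵥ v = star x ⬝ᵥ (Aᴴ *ᵥ v) := by
  rw [star_mulVec, dotProduct_mulVec]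

theorem hamiltonian_mulVec_cross_pairing
    [NonUnitalRing R] [StarRing R] (A : Matrix m n R) (G : Matrix m m R) (K : Matrix n n R)
    (x u : n → R) (y v : m → R) :
    star x ⬝ᵥ ((fromBlocks A G K (-Aᴴ) *ᵥ Sum.elim u v) ∘ Sum.inr) +
        star ((fromBlocks A G K (-Aᴴ) *ᵥ Sum.elim x y) ∘ Sum.inl) ⬝ᵥ v =
      star x ⬝ᵥ (K *ᵥ u) + star y ⬝ᵥ (Gᴴ *ᵥ v) := by
  simp only [fromBlocks_mulVec, Sum.elim_comp_inl, Sum.elim_comp_inr]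
  calc
    star x ⬝ᵥ (K *ᵥ u + -Aᴴ *ᵥ v) + star (A *ᵥ x + G *ᵥ y) ⬝ᵥ v
        = (star x ⬝ᵥ (K *ᵥ u) - star x ⬝ᵥ (Aᴴ *ᵥ v)) +
            (star x ⬝ᵥ (Aᴴ *ᵥ v) + star y ⬝ᵥ (Gᴴ *ᵥ v)) := by
      rw [neg_mulVec, ← sub_eq_add_neg, dotProduct_sub, star_add, add_dotProduct,
        star_mulVec_dotProduct, star_mulVec_dotProduct]
    _ = star x ⬝ᵥ (K *ᵥ u) + star y ⬝ᵥ (Gᴴ *ᵥ v) := by abel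

theorem hamiltonian_eigen_identity_general [CommRing R] [StarRing R]
    (A G K : Matrix n n R) (lam mu : R) (x y u v : n → R)
    (hxy : fromBlocks A G K (-Aᴴ) *ᵥ Sum.elim x y = lam • Sum.elim x y)
    (huv : fromBlocks A G K (-Aᴴ) *ᵥ Sum.elim u v = mu • Sum.elim u v) :
    star x ⬝ᵥ (K *ᵥ u) + star y ⬝ᵥ (Gᴴ *ᵥ v) =
      (mu + starRingEnd R lam) * (star x ⬝ᵥ v) := by
  have second_row : (fromBlocks A G K (-Aᴴ) *ᵥ Sum.elim u v) ∘ Sum.inr = mu • v := by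
    rw [huv, Pi.smul_comp, Sum.elim_comp_inr]
  have first_row : (fromBlocks A G K (-Aᴴ) *ᵥ Sum.elim x y) ∘ Sum.inl = lam • x := by
    rw [hxy, Pi.smul_comp, Sum.elim_comp_inl]
  rw [← hamiltonian_mulVec_cross_pairing A G K, second_row, first_row, star_smul, dotProduct_smul,
    smul_dotProduct, smul_eq_mul, smul_eq_mul, add_mul, starRingEnd_apply]

end

theorem hamiltonian_eigen_identity {n : Type*} [Fintype n] [DecidableEq n]
    (A G K : Matrix n n ℂ) (hG : G.IsHermitian) (hK : K.IsHermitian)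
    (lam : ℂ) (x y : n → ℂ)
    (h : (Matrix.fromBlocks A G K (-Aᴴ)) *ᵥ (Sum.elim x y) = lam • (Sum.elim x y)) :
    (star x) ⬝ᵥ (K *ᵥ x) + (star y) ⬝ᵥ (G *ᵥ y)
      = (lam + starRingEnd ℂ lam) * ((star x) ⬝ᵥ y) := by
  simpa only [hG.eq] using hamiltonian_eigen_identity_general A G K lam lam x y x y h h
end

section
/- Let n be a finite type, A G K : Matrix n n ℂ with G and K positive definite, and set M = Matrix.fromBlocks A G K (-Aᴴ). Suppose λ ∈ ℂ and x y : n → ℂ are such that Sum.elim x y ≠ 0 and M *ᵥ (Sum.elim x y) = λ • (Sum.elim x y). Then Re λ ≠ 0. -/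
open Matrix
open scoped ComplexOrder

/-!
If `M v = μ v`, then for every matrix `H` the Lyapunov expression `H M + Mᴴ H` has the value
`(μ + conj μ) (v* H v)` at `v`, so `μ` is off the imaginary axis as soon as some `H` makes that
expression positive definite. For `M = [A G; K -Aᴴ]` the block swap `H = [0 1; 1 0]` does: the
contributions of `A` cancel and `H M + Mᴴ H = diag(K + Kᴴ, G + Gᴴ)` remains.
-/

/-- The Lyapunov operator `H ↦ H M + Mᴴ H` of a square matrix `M`, whose definiteness at some `H`
locates the eigenvalues of `M` relative to the imaginary axis. -/
def lyapunov {n R : Type*} [Fintype n] [Mul R] [AddCommMonoid R] [Star R]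
    (M H : Matrix n n R) : Matrix n n R :=
  H * M + Mᴴ * H

section Eigenvalue

variable {n R : Type*} [Fintype n] [CommRing R] [StarRing R]
  {M H : Matrix n n R} {v : n → R} {μ : R}

theorem star_dotProduct_lyapunov_mulVec_of_mulVec_eq_smul (hv : M *ᵥ v = μ • v) :
    star v ⬝ᵥ (lyapunov M H *ᵥ v) = (μ + star μ) * (star v ⬝ᵥ (H *ᵥ v)) := by
  have right_term : star v ⬝ᵥ ((H * M) *ᵥ v) = μ * (star v ⬝ᵥ (H *ᵥ v)) := by
    rw [← mulVec_mulVec, hv, mulVec_smul, dotProduct_smul, smul_eq_mul]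
  have left_term : star v ⬝ᵥ ((Mᴴ * H) *ᵥ v) = star μ * (star v ⬝ᵥ (H *ᵥ v)) := by
    rw [← mulVec_mulVec, dotProduct_mulVec, ← star_mulVec, hv, star_smul, smul_dotProduct,
      smul_eq_mul]
  rw [lyapunov, add_mulVec, dotProduct_add, right_term, left_term, add_mul]

theorem add_star_ne_zero_of_posDef_lyapunov [PartialOrder R] (hH : (lyapunov M H).PosDef)
    (hv₀ : v ≠ 0) (hv : M *ᵥ v = μ • v) : μ + star μ ≠ 0 := by
  intro hμ
  have hpos := hH.dotProduct_mulVec_pos hv₀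
  rw [star_dotProduct_lyapunov_mulVec_of_mulVec_eq_smul hv, hμ, zero_mul] at hpos
  exact hpos.false

end Eigenvalue

theorem posDef_fromBlocks_zero_zero {m n R : Type*} [Finite m] [Finite n] [Ring R]
    [PartialOrder R] [StarRing R] [IsOrderedAddMonoid R] {P : Matrix m m R} {Q : Matrix n n R}
    (hP : P.PosDef) (hQ : Q.PosDef) : (fromBlocks P 0 0 Q).PosDef := by
  cases nonempty_fintype m
  cases nonempty_fintype n
  refine .of_dotProduct_mulVec_pos (hP.isHermitian.fromBlocks conjTranspose_zero hQ.isHermitian)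
    fun v hv ↦ ?_
  obtain ⟨x, y, rfl⟩ : ∃ x y, v = Sum.elim x y := ⟨_, _, (Sum.elim_comp_inl_inr v).symm⟩
  have split_form : star (Sum.elim x y) ⬝ᵥ (fromBlocks P 0 0 Q *ᵥ Sum.elim x y) =
      star x ⬝ᵥ (P *ᵥ x) + star y ⬝ᵥ (Q *ᵥ y) := by
    simp [fromBlocks_mulVec, Function.star_sumElim]
  rw [split_form]
  by_cases hx : x = 0
  · have hy : y ≠ 0 := by
      rintro rfl
      exact hv (by rw [hx, Sum.elim_zero_zero])
    simpa [hx] using hQ.dotProduct_mulVec_pos hy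
  · exact add_pos_of_pos_of_nonneg (hP.dotProduct_mulVec_pos hx)
      (hQ.posSemidef.dotProduct_mulVec_nonneg y)

theorem lyapunov_fromBlocks_swap {n R : Type*} [Fintype n] [DecidableEq n] [NonAssocRing R]
    [StarRing R] (A G K : Matrix n n R) :
    lyapunov (fromBlocks A G K (-Aᴴ)) (fromBlocks 0 1 1 0) =
      fromBlocks (K + Kᴴ) 0 0 (G + Gᴴ) := by
  simp [lyapunov, fromBlocks_multiply, fromBlocks_conjTranspose, fromBlocks_add]

theorem hamiltonian_posdef_no_imaginary_eigen_general {n R : Type*} [Fintype n] [CommRing R]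
    [PartialOrder R] [StarRing R] [IsOrderedAddMonoid R] {A G K : Matrix n n R}
    (hG : (G + Gᴴ).PosDef) (hK : (K + Kᴴ).PosDef) {μ : R} {v : n ⊕ n → R} (hv₀ : v ≠ 0)
    (hv : fromBlocks A G K (-Aᴴ) *ᵥ v = μ • v) : μ + star μ ≠ 0 := by
  classical
  refine add_star_ne_zero_of_posDef_lyapunov (H := fromBlocks 0 1 1 0) ?_ hv₀ hv
  rw [lyapunov_fromBlocks_swap]
  exact posDef_fromBlocks_zero_zero hK hG

theorem hamiltonian_posdef_no_imaginary_eigen {n : Type*} [Fintype n] [DecidableEq n]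
    (A G K : Matrix n n ℂ) (hG : G.PosDef) (hK : K.PosDef)
    (lam : ℂ) (x y : n → ℂ) (hxy : Sum.elim x y ≠ 0)
    (h : (Matrix.fromBlocks A G K (-Aᴴ)) *ᵥ (Sum.elim x y) = lam • (Sum.elim x y)) :
    lam.re ≠ 0 := by
  intro hre
  exact hamiltonian_posdef_no_imaginary_eigen_general (hG.add hG.conjTranspose)
    (hK.add hK.conjTranspose) hxy h (by simp [Complex.ext_iff, hre])
end

section
/- (Schur–Hamiltonian decomposition) Let n : ℕ, let J : Matrix (Fin n ⊕ Fin n) (Fin n ⊕ Fin n) ℂ be Matrix.fromBlocks 0 1 (-1) 0, and let M : Matrix (Fin n ⊕ Fin n) (Fin n ⊕ Fin n) ℂ be Hamiltonian, i.e. (J * M)ᴴ = J * M, with no purely imaginary eigenvalues (for every λ ∈ spectrum ℂ M, Re λ ≠ 0). Then there exist Q : Matrix (Fin n ⊕ Fin n) (Fin n ⊕ Fin n) ℂ and T R : Matrix (Fin n) (Fin n) ℂ such that: Q is unitary (Qᴴ * Q = 1) and symplectic (Qᴴ * J * Q = J); T is upper triangular (T i j = 0 whenever j < i) and stable (every λ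 ∈ spectrum ℂ T satisfies Re λ < 0); R is Hermitian (Rᴴ = R); and Qᴴ * M * Q = Matrix.fromBlocks T R 0 (-Tᴴ). -/
open Matrix

/-!
A Hamiltonian `M` is skew for the sesquilinear form `⟪x, J y⟫`, so the generalized eigenspaces of
`M` for `μ` and `ν` are orthogonal under this form unless `conj μ + ν = 0`. Hence the spectral
subspaces for the open left and right half-planes are both isotropic. They span the whole space, and
an isotropic subspace has at most half the dimension, so both have exactly half. Let the columns of
`U` be an orthonormal basis of the stable subspace that triangularizes `M` on it; isotropy makes
`[U, -J U]` unitary and symplectic, and invariance puts `M` in the required block form.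
-/

section SpectralSubspace

open Module.End

variable {R V : Type*} [CommRing R] [AddCommGroup V] [Module R V]

/-- The sum of the maximal generalized eigenspaces of `f` for the scalars in `s`; the stable
subspace of `f` is the case where `s` is the open left half-plane. -/
def spectralSubspace (f : Module.End R V) (s : Set R) : Submodule R V :=
  ⨆ μ ∈ s, f.maxGenEigenspace μ

theorem apply_mem_spectralSubspace (f : Module.End R V) (s : Set R) :
    ∀ x ∈ spectralSubspace f s, f x ∈ spectralSubspace f s := by
  have hle : spectralSubspace f s ≤ (spectralSubspace f s).comap f := iSup₂_le fun μ hμ =>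
    ((mem_invtSubmodule f).1 (f.genEigenspace_mem_invtSubmodule μ ⊤)).trans <|
      Submodule.comap_mono (le_biSup f.maxGenEigenspace hμ)
  exact hle

theorem spectralSubspace_union (f : Module.End R V) (s t : Set R) :
    spectralSubspace f (s ∪ t) = spectralSubspace f s ⊔ spectralSubspace f t :=
  iSup_union

theorem mem_of_hasEigenvalue_restrict_spectralSubspace [IsDomain R] [Module.IsTorsionFree R V]
    {f : Module.End R V} {s : Set R} {μ : R}
    (hμ : HasEigenvalue (f.restrict (apply_mem_spectralSubspace f s)) μ) : μ ∈ s := by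
  by_contra hμs
  have hle : spectralSubspace f s ≤ ⨆ (ν) (_ : ν ≠ μ), f.maxGenEigenspace ν :=
    iSup₂_mono' fun ν hν => ⟨ν, ne_of_mem_of_not_mem hν hμs, le_rfl⟩
  exact hμ <| eigenspace_restrict_eq_bot _ <|
    (f.independent_maxGenEigenspace μ).mono eigenspace_le_maxGenEigenspace hle

theorem spectralSubspace_eq_top {K V : Type*} [Field K] [IsAlgClosed K] [AddCommGroup V]
    [Module K V] [FiniteDimensional K V] {f : Module.End K V} {s : Set K}
    (hs : ∀ μ, f.HasEigenvalue μ → μ ∈ s) : spectralSubspace f s = ⊤ := by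
  rw [eq_top_iff, ← iSup_maxGenEigenspace_eq_top f]
  refine iSup_le fun μ => ?_
  by_cases hμ : f.HasEigenvalue μ
  · exact le_iSup₂_of_le μ (hs μ hμ) le_rfl
  · have hbot : f.maxGenEigenspace μ = ⊥ := by
      by_contra hne
      exact hμ ((hasUnifEigenvalue_iff_hasUnifEigenvalue_one (by simp)).1 hne)
    exact hbot ▸ bot_le

variable {R' S V' W : Type*} [CommRing R'] [AddCommGroup V'] [Module R' V'] [CommRing S]
  [IsDomain S] [AddCommGroup W] [Module S W] [Module.IsTorsionFree S W] {σ : R →+* S} {τ : R' →+* S}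
  {B : V →ₛₗ[σ] V' →ₛₗ[τ] W} {f : Module.End R V} {g : Module.End R' V'}

theorem apply_eq_zero_of_mem_maxGenEigenspace_of_skew (hfg : ∀ x y, B (f x) y = -B x (g y))
    {μ : R} {ν : R'} (hne : σ μ + τ ν ≠ 0) {x : V} {y : V'} (hx : x ∈ f.maxGenEigenspace μ)
    (hy : y ∈ g.maxGenEigenspace ν) : B x y = 0 := by
  obtain ⟨k, hk⟩ := (f.mem_maxGenEigenspace μ x).1 hx
  obtain ⟨l, hl⟩ := (g.mem_maxGenEigenspace ν y).1 hy
  clear hx hy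
  induction k generalizing x y l with
  | zero => simp_all
  | succ k ihk =>
    induction l generalizing y with
    | zero => simp_all
    | succ l ihl =>
      have hleft : B ((f - μ • 1) x) y = 0 := ihk (by rwa [pow_succ] at hk) (l + 1) hl
      have hright : B x ((g - ν • 1) y) = 0 := ihl (by rwa [pow_succ] at hl)
      have hsum : (σ μ + τ ν) • B x y = -(B ((f - μ • 1) x) y + B x ((g - ν • 1) y)) := by
        simp only [LinearMap.sub_apply, LinearMap.smul_apply, Module.End.one_apply, map_sub,
          LinearMap.map_smulₛₗ, hfg]
        module
      rw [hleft, hright, add_zero, neg_zero] at hsum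
      exact (smul_eq_zero.1 hsum).resolve_left hne

theorem spectralSubspace_le_orthogonalBilin_of_skew (hfg : ∀ x y, B (f x) y = -B x (g y))
    {s : Set R} {t : Set R'} (hst : ∀ μ ∈ s, ∀ ν ∈ t, σ μ + τ ν ≠ 0) :
    spectralSubspace g t ≤ (spectralSubspace f s).orthogonalBilin B := by
  refine iSup₂_le fun ν hν y hy x hx => ?_
  have hle : spectralSubspace f s ≤ LinearMap.ker (B.flip y) := iSup₂_le fun μ hμ x hx =>
    apply_eq_zero_of_mem_maxGenEigenspace_of_skew hfg (hst μ hμ ν hν) hx hy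
  exact hle hx

end SpectralSubspace

section IsotropicSubspace

open scoped InnerProductSpace ComplexConjugate

variable {𝕜 E : Type*} [RCLike 𝕜] [NormedAddCommGroup E] [InnerProductSpace 𝕜 E]
  [FiniteDimensional 𝕜 E] {J f : Module.End 𝕜 E}

theorem two_mul_finrank_le_of_isotropic (hJ : Function.Injective J) {V : Submodule 𝕜 E}
    (hV : V ≤ V.orthogonalBilin ((innerₛₗ 𝕜).compl₂ J)) :
    2 * Module.finrank 𝕜 V ≤ Module.finrank 𝕜 E := by
  have hmap : V.map J ≤ Vᗮ := Submodule.map_le_iff_le_comap.2 hV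
  have hle : Module.finrank 𝕜 V ≤ Module.finrank 𝕜 Vᗮ :=
    (V.equivMapOfInjective J hJ).finrank_eq.trans_le (Submodule.finrank_mono hmap)
  have hadd := V.finrank_add_finrank_orthogonal
  omega

theorem two_mul_finrank_spectralSubspace_le (hJ : Function.Injective J)
    (hf : ∀ x y, ⟪f x, J y⟫_𝕜 = -⟪x, J (f y)⟫_𝕜) {s : Set 𝕜}
    (hs : ∀ μ ∈ s, ∀ ν ∈ s, conj μ + ν ≠ 0) :
    2 * Module.finrank 𝕜 (spectralSubspace f s) ≤ Module.finrank 𝕜 E :=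
  two_mul_finrank_le_of_isotropic hJ <|
    spectralSubspace_le_orthogonalBilin_of_skew (B := (innerₛₗ 𝕜).compl₂ J) hf hs

theorem conj_add_ne_zero_of_re_add_re_ne_zero {μ ν : 𝕜}
    (h : RCLike.re μ + RCLike.re ν ≠ 0) : conj μ + ν ≠ 0 := fun h0 =>
  h (by simpa using congrArg RCLike.re h0)

end IsotropicSubspace

section StableSubspace

open scoped InnerProductSpace

variable {E : Type*} [NormedAddCommGroup E] [InnerProductSpace ℂ E] [FiniteDimensional ℂ E]
  {J f : Module.End ℂ E}

theorem two_mul_finrank_spectralSubspace_re_neg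
    (hJ : Function.Injective J) (hf : ∀ x y, ⟪f x, J y⟫_ℂ = -⟪x, J (f y)⟫_ℂ)
    (hspec : ∀ μ, f.HasEigenvalue μ → μ.re ≠ 0) :
    2 * Module.finrank ℂ (spectralSubspace f {μ | μ.re < 0}) = Module.finrank ℂ E := by
  have hneg := two_mul_finrank_spectralSubspace_le hJ hf (s := {μ | μ.re < 0})
    fun μ hμ ν hν => conj_add_ne_zero_of_re_add_re_ne_zero (add_neg hμ hν).ne
  have hpos := two_mul_finrank_spectralSubspace_le hJ hf (s := {μ | 0 < μ.re})
    fun μ hμ ν hν => conj_add_ne_zero_of_re_add_re_ne_zero (add_pos hμ hν).ne'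
  have htop : spectralSubspace f {μ | μ.re < 0} ⊔ spectralSubspace f {μ | 0 < μ.re} = ⊤ := by
    rw [← spectralSubspace_union]
    exact spectralSubspace_eq_top fun μ hμ => (hspec μ hμ).lt_or_gt
  have hsum := Submodule.finrank_add_le_finrank_add_finrank
    (spectralSubspace f {μ | μ.re < 0}) (spectralSubspace f {μ | 0 < μ.re})
  rw [htop, finrank_top] at hsum
  omega

theorem exists_stable_lagrangian_submodule
    (hJ : Function.Injective J) (hf : ∀ x y, ⟪f x, J y⟫_ℂ = -⟪x, J (f y)⟫_ℂ)
    (hspec : ∀ μ, f.HasEigenvalue μ → μ.re ≠ 0) :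
    ∃ (V : Submodule ℂ E) (hV : ∀ x ∈ V, f x ∈ V),
      2 * Module.finrank ℂ V = Module.finrank ℂ E ∧ (∀ x ∈ V, ∀ y ∈ V, ⟪x, J y⟫_ℂ = 0) ∧
      ∀ μ, Module.End.HasEigenvalue (f.restrict hV) μ → μ.re < 0 := by
  have hiso := spectralSubspace_le_orthogonalBilin_of_skew (B := (innerₛₗ ℂ).compl₂ J) hf
    (s := {μ | μ.re < 0}) (t := {μ | μ.re < 0})
    fun μ hμ ν hν => conj_add_ne_zero_of_re_add_re_ne_zero (add_neg hμ hν).ne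
  exact ⟨spectralSubspace f {μ | μ.re < 0}, apply_mem_spectralSubspace f _,
    two_mul_finrank_spectralSubspace_re_neg hJ hf hspec, fun x hx y hy => hiso hy x hx,
    fun μ hμ => show μ ∈ {μ : ℂ | μ.re < 0} from
      mem_of_hasEigenvalue_restrict_spectralSubspace hμ⟩

end StableSubspace

section SchurTriangularization

open scoped InnerProductSpace

variable {n : ℕ} {E : Type*} [NormedAddCommGroup E] [InnerProductSpace ℂ E]
  [FiniteDimensional ℂ E]

theorem exists_orthonormal_inner_apply_eq_zero_of_lt (hn : Module.finrank ℂ E = n)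
    (f : Module.End ℂ E) :
    ∃ u : Fin n → E, Orthonormal ℂ u ∧ ∀ i j, j < i → ⟪u j, f (u i)⟫_ℂ = 0 := by
  induction n generalizing E with
  | zero => exact ⟨Fin.elim0, ⟨Fin.rec0, Fin.rec0⟩, Fin.rec0⟩
  | succ n ih =>
    have : Nontrivial E := Module.nontrivial_of_finrank_eq_succ hn
    -- The orthogonal complement of an eigenvector of the adjoint is `f`-invariant.
    obtain ⟨μ, hμ⟩ := Module.End.exists_eigenvalue f.adjoint
    obtain ⟨v, hv⟩ := hμ.exists_hasEigenvector
    have hinvt : ∀ x ∈ (ℂ ∙ v)ᗮ, f x ∈ (ℂ ∙ v)ᗮ := fun x hx => by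
      rw [Submodule.mem_orthogonal_singleton_iff_inner_right] at hx ⊢
      rw [← LinearMap.adjoint_inner_left, hv.apply_eq_smul, inner_smul_left, hx, mul_zero]
    have hfinrank : Module.finrank ℂ (ℂ ∙ v)ᗮ = n :=
      have := Fact.mk hn
      Submodule.finrank_orthogonal_span_singleton hv.2
    obtain ⟨u, hu, hlower⟩ := ih hfinrank (f.restrict hinvt)
    have hperp : ∀ x : (ℂ ∙ v)ᗮ, ⟪(‖v‖⁻¹ : ℂ) • v, (x : E)⟫_ℂ = 0 := fun x => by
      rw [inner_smul_left, Submodule.mem_orthogonal_singleton_iff_inner_right.1 x.2, mul_zero]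
    refine ⟨vecCons ((‖v‖⁻¹ : ℂ) • v) fun i => (u i : E), orthonormal_vecCons_iff.2
      ⟨norm_smul_inv_norm hv.2, fun i => hperp (u i),
        hu.comp_linearIsometry (Submodule.subtypeₗᵢ _)⟩, fun i j hji => ?_⟩
    obtain ⟨i, rfl⟩ := Fin.exists_succ_eq_of_ne_zero (Fin.ne_zero_of_lt hji)
    cases j using Fin.cases with
    | zero => exact hperp (f.restrict hinvt (u i))
    | succ j => exact hlower i j (Fin.succ_lt_succ_iff.1 hji)

theorem exists_orthonormalBasis_isUpperTriangular (hn : Module.finrank ℂ E = n)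
    (f : Module.End ℂ E) :
    ∃ b : OrthonormalBasis (Fin n) ℂ E, (f.toMatrixOrthonormal b).IsUpperTriangular := by
  obtain ⟨u, hu, hlower⟩ := exists_orthonormal_inner_apply_eq_zero_of_lt hn f.adjoint
  have hspan := hu.linearIndependent.span_eq_top_of_card_eq_finrank' (by simp [hn])
  refine ⟨OrthonormalBasis.mk hu hspan.ge, fun i j hji => ?_⟩
  rw [LinearMap.toMatrixOrthonormal_apply_apply, OrthonormalBasis.coe_mk,
    ← LinearMap.adjoint_inner_left, ← inner_conj_symm, hlower i j hji, map_zero]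

end SchurTriangularization

section FrameMatrix

open scoped InnerProductSpace

variable {𝕜 ι κ : Type*} [RCLike 𝕜] [Fintype ι] [Fintype κ]
  {V : Submodule 𝕜 (EuclideanSpace 𝕜 ι)}

/-- The matrix whose columns are the vectors of an orthonormal basis of a subspace of
`EuclideanSpace 𝕜 ι`: an isometric frame of that subspace. -/
noncomputable def frameMatrix (b : OrthonormalBasis κ 𝕜 V) : Matrix ι κ 𝕜 :=
  of fun i k => (b k : EuclideanSpace 𝕜 ι) i

theorem conjTranspose_frameMatrix_mul_self [DecidableEq κ] (b : OrthonormalBasis κ 𝕜 V) :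
    (frameMatrix b)ᴴ * frameMatrix b = 1 := by
  ext k l
  rw [one_apply, ← orthonormal_iff_ite.1 b.orthonormal k l, Submodule.coe_inner,
    EuclideanSpace.inner_eq_star_dotProduct, dotProduct_comm]
  rfl

variable [DecidableEq ι]

theorem conjTranspose_frameMatrix_mul_mul_apply (b : OrthonormalBasis κ 𝕜 V) (A : Matrix ι ι 𝕜)
    (k l : κ) :
    ((frameMatrix b)ᴴ * A * frameMatrix b) k l =
      ⟪(b k : EuclideanSpace 𝕜 ι), toEuclideanLin A (b l)⟫_𝕜 := by
  rw [Matrix.mul_assoc, EuclideanSpace.inner_eq_star_dotProduct, dotProduct_comm]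
  rfl

theorem mul_frameMatrix [DecidableEq κ] (b : OrthonormalBasis κ 𝕜 V) {A : Matrix ι ι 𝕜}
    (hA : ∀ x ∈ V, toEuclideanLin A x ∈ V) :
    A * frameMatrix b =
      frameMatrix b * ((toEuclideanLin A).restrict hA).toMatrixOrthonormal b := by
  ext i l
  calc (A * frameMatrix b) i l
      = ((toEuclideanLin A).restrict hA (b l) : EuclideanSpace 𝕜 ι) i := rfl
    _ = (frameMatrix b * ((toEuclideanLin A).restrict hA).toMatrixOrthonormal b) i l := by
        rw [← b.sum_repr' ((toEuclideanLin A).restrict hA (b l))]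
        simp only [Submodule.coe_sum, Submodule.coe_smul, WithLp.ofLp_sum, WithLp.ofLp_smul,
          Finset.sum_apply, Pi.smul_apply, smul_eq_mul, mul_apply, frameMatrix, of_apply,
          LinearMap.toMatrixOrthonormal_apply_apply, mul_comm]

end FrameMatrix

section SymplecticFrame

variable {R ι κ : Type*} [Ring R] [StarRing R] [Fintype ι]

/-- The completion `[U, -J U]` of an isotropic isometric frame `U` to a square matrix. With
`J = [[0, 1], [-1, 0]]` and `U = [[X], [Y]]` it is the unitary symplectic
matrix `[[X, -Y], [Y, X]]`. -/
def symplecticFrame (J : Matrix ι ι R) (U : Matrix ι κ R) : Matrix ι (κ ⊕ κ) R :=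
  fromCols U (-(J * U))

variable {J M : Matrix ι ι R} {U : Matrix ι κ R}

theorem conjTranspose_symplecticFrame_mul_mul (hJ : Jᴴ = -J) (A : Matrix ι ι R) :
    (symplecticFrame J U)ᴴ * A * symplecticFrame J U =
      fromBlocks (Uᴴ * A * U) (-(Uᴴ * (A * J) * U)) (Uᴴ * (J * A) * U)
        (-(Uᴴ * (J * A * J) * U)) := by
  rw [symplecticFrame, conjTranspose_fromCols_eq_fromRows_conjTranspose, fromRows_mul,
    fromRows_mul_fromCols]
  simp only [conjTranspose_neg, conjTranspose_mul, hJ, Matrix.mul_neg, neg_neg, Matrix.mul_assoc]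

variable [DecidableEq ι]

theorem conjTranspose_eq_mul_mul_of_hamiltonian (hJ : Jᴴ = -J) (hJJ : J * J = -1)
    (hM : (J * M)ᴴ = J * M) : Mᴴ = J * M * J := by
  rw [← hM, conjTranspose_mul, hJ, Matrix.mul_assoc, Matrix.neg_mul, hJJ, neg_neg, Matrix.mul_one]

theorem isHermitian_mul_of_hamiltonian (hJ : Jᴴ = -J) (hJJ : J * J = -1)
    (hM : (J * M)ᴴ = J * M) : (M * J).IsHermitian := by
  rw [IsHermitian, conjTranspose_mul, hJ, conjTranspose_eq_mul_mul_of_hamiltonian hJ hJJ hM,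
    Matrix.mul_assoc J, Matrix.neg_mul, ← Matrix.mul_assoc J, hJJ, neg_one_mul, neg_neg]

variable [DecidableEq κ]

theorem conjTranspose_symplecticFrame_mul_self (hJ : Jᴴ = -J) (hJJ : J * J = -1)
    (hU : Uᴴ * U = 1) (hUJ : Uᴴ * J * U = 0) :
    (symplecticFrame J U)ᴴ * symplecticFrame J U = 1 := by
  simpa [hJJ, hU, hUJ] using conjTranspose_symplecticFrame_mul_mul (U := U) hJ 1

theorem conjTranspose_symplecticFrame_mul_J_mul_self (hJ : Jᴴ = -J) (hJJ : J * J = -1)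
    (hU : Uᴴ * U = 1) (hUJ : Uᴴ * J * U = 0) :
    (symplecticFrame J U)ᴴ * J * symplecticFrame J U = fromBlocks 0 1 (-1) 0 := by
  simp [conjTranspose_symplecticFrame_mul_mul hJ, hJJ, hU, hUJ]

theorem conjTranspose_symplecticFrame_mul_hamiltonian_mul_self [Fintype κ] {T : Matrix κ κ R}
    (hJ : Jᴴ = -J) (hJJ : J * J = -1) (hM : (J * M)ᴴ = J * M) (hU : Uᴴ * U = 1)
    (hUJ : Uᴴ * J * U = 0) (hMU : M * U = U * T) :
    (symplecticFrame J U)ᴴ * M * symplecticFrame J U =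
      fromBlocks T (-(Uᴴ * (M * J) * U)) 0 (-Tᴴ) := by
  have hT : Uᴴ * M * U = T := by
    rw [Matrix.mul_assoc, hMU, ← Matrix.mul_assoc, hU, Matrix.one_mul]
  have hlower : Uᴴ * (J * M) * U = 0 := by
    rw [Matrix.mul_assoc, Matrix.mul_assoc J, hMU, ← Matrix.mul_assoc, ← Matrix.mul_assoc, hUJ,
      Matrix.zero_mul]
  have hTH : Uᴴ * (J * M * J) * U = Tᴴ := by
    rw [← conjTranspose_eq_mul_mul_of_hamiltonian hJ hJJ hM, ← hT]
    simp [Matrix.mul_assoc]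
  rw [conjTranspose_symplecticFrame_mul_mul hJ, hT, hlower, hTH]

end SymplecticFrame

section StableFrame

open scoped InnerProductSpace

variable {ι : Type*} [Fintype ι] [DecidableEq ι]

theorem inner_toEuclideanLin_hamiltonian {𝕜 : Type*} [RCLike 𝕜] {J M : Matrix ι ι 𝕜}
    (hJ : Jᴴ = -J) (hM : (J * M)ᴴ = J * M) (x y : EuclideanSpace 𝕜 ι) :
    ⟪toEuclideanLin M x, toEuclideanLin J y⟫_𝕜 =
      -⟪x, toEuclideanLin J (toEuclideanLin M y)⟫_𝕜 := by
  have hMJ : Mᴴ * J = -(J * M) := by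
    rw [← hM, conjTranspose_mul, hJ, Matrix.mul_neg, neg_neg]
  calc ⟪toEuclideanLin M x, toEuclideanLin J y⟫_𝕜
      = ⟪x, toEuclideanLin (Mᴴ * J) y⟫_𝕜 := by
        rw [← LinearMap.adjoint_inner_right, ← toEuclideanLin_conjTranspose_eq_adjoint,
          toLpLin_mul_same, LinearMap.comp_apply]
    _ = -⟪x, toEuclideanLin J (toEuclideanLin M y)⟫_𝕜 := by
        rw [hMJ, map_neg, toLpLin_mul_same, LinearMap.neg_apply, inner_neg_right,
          LinearMap.comp_apply]

theorem toEuclideanLin_injective_of_mul_self_eq_neg_one {𝕜 : Type*} [RCLike 𝕜]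
    {J : Matrix ι ι 𝕜} (hJJ : J * J = -1) : Function.Injective (toEuclideanLin J) := by
  refine Function.LeftInverse.injective (g := toEuclideanLin (-J)) fun x => ?_
  rw [← LinearMap.comp_apply, ← toLpLin_mul_same, Matrix.neg_mul, hJJ, neg_neg]
  simp

theorem exists_frameMatrix_isUpperTriangular {V : Submodule ℂ (EuclideanSpace ℂ ι)} {n : ℕ}
    (hn : Module.finrank ℂ V = n) {M : Matrix ι ι ℂ} (hM : ∀ x ∈ V, toEuclideanLin M x ∈ V) :
    ∃ (b : OrthonormalBasis (Fin n) ℂ V) (T : Matrix (Fin n) (Fin n) ℂ),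
      M * frameMatrix b = frameMatrix b * T ∧ T.IsUpperTriangular ∧
      ∀ μ ∈ spectrum ℂ T, Module.End.HasEigenvalue ((toEuclideanLin M).restrict hM) μ := by
  obtain ⟨b, hb⟩ :=
    exists_orthonormalBasis_isUpperTriangular (E := V) hn ((toEuclideanLin M).restrict hM)
  refine ⟨b, _, mul_frameMatrix b hM, hb, fun μ hμ => ?_⟩
  rwa [AlgEquiv.spectrum_eq, ← Module.End.hasEigenvalue_iff_mem_spectrum] at hμ

theorem exists_isUpperTriangular_stable_isotropic_frame {J M : Matrix ι ι ℂ} {n : ℕ}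
    (hn : Fintype.card ι = 2 * n) (hJ : Jᴴ = -J) (hJJ : J * J = -1)
    (hM : (J * M)ᴴ = J * M) (hspec : ∀ μ ∈ spectrum ℂ M, μ.re ≠ 0) :
    ∃ (U : Matrix ι (Fin n) ℂ) (T : Matrix (Fin n) (Fin n) ℂ),
      Uᴴ * U = 1 ∧ Uᴴ * J * U = 0 ∧ M * U = U * T ∧ T.IsUpperTriangular ∧
      ∀ μ ∈ spectrum ℂ T, μ.re < 0 := by
  obtain ⟨V, hV, hhalf, hiso, hstable⟩ :=
    exists_stable_lagrangian_submodule (toEuclideanLin_injective_of_mul_self_eq_neg_one hJJ)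
      (inner_toEuclideanLin_hamiltonian hJ hM) fun μ hμ =>
        hspec μ (spectrum_toLpLin (A := M) 2 ▸ hμ.mem_spectrum)
  have hfinrank : Module.finrank ℂ V = n := by
    rw [finrank_euclideanSpace, hn] at hhalf
    exact Nat.eq_of_mul_eq_mul_left two_pos hhalf
  obtain ⟨b, T, hMb, hT, hTspec⟩ := exists_frameMatrix_isUpperTriangular hfinrank hV
  refine ⟨frameMatrix b, T, conjTranspose_frameMatrix_mul_self b, ?_, hMb, hT,
    fun μ hμ => hstable μ (hTspec μ hμ)⟩
  ext k l
  rw [conjTranspose_frameMatrix_mul_mul_apply]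
  exact hiso _ (b k).2 _ (b l).2

end StableFrame

theorem schur_hamiltonian_decomposition (n : ℕ)
    (J M : Matrix (Fin n ⊕ Fin n) (Fin n ⊕ Fin n) ℂ)
    (hJ : J = Matrix.fromBlocks 0 1 (-1) 0)
    (hM : (J * M)ᴴ = J * M)
    (hspec : ∀ lam ∈ spectrum ℂ M, lam.re ≠ 0) :
    ∃ (Q : Matrix (Fin n ⊕ Fin n) (Fin n ⊕ Fin n) ℂ) (T R : Matrix (Fin n) (Fin n) ℂ),
      Qᴴ * Q = 1 ∧ Qᴴ * J * Q = J ∧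
      (∀ i j : Fin n, j < i → T i j = 0) ∧
      (∀ lam ∈ spectrum ℂ T, lam.re < 0) ∧
      Rᴴ = R ∧
      Qᴴ * M * Q = Matrix.fromBlocks T R 0 (-Tᴴ) := by
  have hJH : Jᴴ = -J := by simp [hJ, fromBlocks_conjTranspose, fromBlocks_neg]
  have hJJ : J * J = -1 := by
    simp [hJ, fromBlocks_multiply, ← fromBlocks_one, fromBlocks_neg]
  obtain ⟨U, T, hU, hUJ, hMU, hT, hTspec⟩ :=
    exists_isUpperTriangular_stable_isotropic_frame (n := n) (by simp [two_mul]) hJH hJJ hM hspec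
  have hQJ := conjTranspose_symplecticFrame_mul_J_mul_self hJH hJJ hU hUJ
  exact ⟨symplecticFrame J U, T, -(Uᴴ * (M * J) * U),
    conjTranspose_symplecticFrame_mul_self hJH hJJ hU hUJ, hQJ.trans hJ.symm,
    fun i j hji => hT hji, hTspec,
    (isHermitian_conjTranspose_mul_mul U (isHermitian_mul_of_hamiltonian hJH hJJ hM)).neg,
    conjTranspose_symplecticFrame_mul_hamiltonian_mul_self hJH hJJ hM hU hUJ hMU⟩
end

section
/- (Symplectic SVD) Let n be a finite type, J = Matrix.fromBlocks 0 1 (-1) 0 : Matrix (n ⊕ n) (n ⊕ n) ℂ, and let Q : Matrix (n ⊕ n) (n ⊕ n) ℂ be unitary (Qᴴ * Q = 1) and symplectic (Qᴴ * J * Q = J). Then there exist unitary matrices U V : Matrix n n ℂ and diagonal matrices S D : Matrix n n ℂ whose entries are real, with 0 ≤ S i i ≤ 1 and (S i i)^2 + (D i i)^2 = 1 for every i, such that (Matrix.fromBlocks Uᴴ 0 0 Uᴴ) * Q * (Matrix.fromBlocks V 0 0 V) = Matrix.fromBlocks S D (-D) S. -/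
open Matrix

/-!
A unitary symplectic `Q` commutes with `J`, so `Q = [[A, B], [-B, A]]`, and `W = A + iB`,
`X = A - iB` are unitary. It suffices to find unitaries `U`, `V` and a unit-modulus vector `w` with
nonnegative real parts such that `Uᴴ W V = diag w` and `Uᴴ X V = diag (conj w)`: then `Uᴴ A V` and
`Uᴴ B V` are the diagonal matrices of real and imaginary parts of `w`. For this, diagonalize the
unitary `W X⁻¹ = U (diag w)² U⁻¹`, choosing the square roots in the right half-plane, and put
`V = X⁻¹ U (diag w)⁻¹`.
-/

open Polynomial

section Spectral

theorem exists_isSelfAdjoint_aeval_eq {A : Type*} [Ring A] [StarRing A] [Algebra ℂ A]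
    [TopologicalSpace A] [ContinuousFunctionalCalculus ℂ A IsStarNormal]
    (a : A) [IsStarNormal a] (ha : (spectrum ℂ a).Finite) :
    ∃ b : A, IsSelfAdjoint b ∧ ∃ p : ℂ[X], aeval b p = a := by
  -- Since the spectrum is finite, any bijection `ℂ ≃ ℝ` is continuous on it, and Lagrange
  -- interpolation inverts it there.
  obtain ⟨e⟩ : Nonempty (ℂ ≃ ℝ) :=
    Cardinal.eq.mp (Cardinal.mk_complex.trans Cardinal.mk_real.symm)
  let f : ℂ → ℂ := fun z ↦ (e z : ℂ)
  have hf : f.Injective := Complex.ofReal_injective.comp e.injective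
  let p : ℂ[X] := Lagrange.interpolate ha.toFinset f id
  have hp : (spectrum ℂ a).EqOn (fun z ↦ p.eval (f z)) id := fun z hz ↦
    Lagrange.eval_interpolate_at_node id hf.injOn (ha.mem_toFinset.mpr hz)
  refine ⟨cfc f a, ?_, p, ?_⟩
  · rw [IsSelfAdjoint, ← cfc_star]
    simp [f]
  · rw [← cfc_map_polynomial p f a ‹_› (ha.continuousOn f), cfc_congr hp, cfc_id ℂ a]

variable {n : Type*} [Fintype n] [DecidableEq n]

theorem aeval_diagonal {R α : Type*} [CommSemiring R] [Semiring α] [Algebra R α]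
    (d : n → α) (p : R[X]) : aeval (diagonal d) p = diagonal fun i ↦ aeval (d i) p := by
  rw [← aeval_pi_apply]
  exact aeval_algHom_apply (diagonalAlgHom R) d p

open scoped Matrix.Norms.L2Operator in
theorem exists_unitaryGroup_star_mul_mul_eq_diagonal (T : Matrix n n ℂ) [IsStarNormal T] :
    ∃ (U : unitaryGroup n ℂ) (d : n → ℂ), star (U : Matrix n n ℂ) * T * U = diagonal d := by
  obtain ⟨H, hH, p, rfl⟩ := exists_isSelfAdjoint_aeval_eq T T.finite_spectrum
  replace hH : H.IsHermitian := hH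
  refine ⟨hH.eigenvectorUnitary, fun i ↦ aeval (hH.eigenvalues i : ℂ) p, ?_⟩
  rw [← Unitary.conjStarAlgAut_star_apply (S := ℂ), ← aeval_algHom_apply,
    hH.conjStarAlgAut_star_eigenvectorUnitary, aeval_diagonal]
  rfl

theorem diagonal_mem_unitaryGroup_iff {R : Type*} [CommRing R] [StarRing R] {d : n → R} :
    diagonal d ∈ unitaryGroup n R ↔ ∀ i, d i ∈ unitary R := by
  simp [mem_unitaryGroup_iff, Unitary.mem_iff_self_mul_star, star_eq_conjTranspose,
    diagonal_conjTranspose, diagonal_mul_diagonal, ← diagonal_one]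

end Spectral

section SimultaneousDiagonalization

theorem mem_unitary_iff_norm_eq_one {𝕜 : Type*} [RCLike 𝕜] {z : 𝕜} : z ∈ unitary 𝕜 ↔ ‖z‖ = 1 := by
  rw [Unitary.mem_iff_self_mul_star, RCLike.star_def, RCLike.mul_conj]
  norm_cast
  exact pow_eq_one_iff_of_nonneg (norm_nonneg z) two_ne_zero

theorem exists_sq_eq_and_re_nonneg (z : ℂ) : ∃ w : ℂ, w ^ 2 = z ∧ 0 ≤ w.re := by
  obtain ⟨w, hw⟩ := IsAlgClosed.exists_pow_nat_eq z two_pos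
  rcases le_total 0 w.re with hre | hre
  · exact ⟨w, hw, hre⟩
  · exact ⟨-w, by rw [neg_sq, hw], by simpa using hre⟩

theorem eq_and_eq_of_add_eq_add_of_sub_eq_sub {M : Type*} [AddCommGroup M] [IsAddTorsionFree M]
    {a b c d : M} (hadd : a + b = c + d) (hsub : a - b = c - d) : a = c ∧ b = d := by
  have hac : a = c := nsmul_right_injective two_ne_zero <| by
    calc 2 • a = (a + b) + (a - b) := by abel
      _ = (c + d) + (c - d) := by rw [hadd, hsub]
      _ = 2 • c := by abel
  exact ⟨hac, add_left_cancel (hac ▸ hadd)⟩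

variable {n : Type*} [Fintype n] [DecidableEq n]

theorem exists_unitaryGroup_inv_mul_mul_eq_diagonal_sq (T : unitaryGroup n ℂ) :
    ∃ (U L : unitaryGroup n ℂ) (w : n → ℂ), (L : Matrix n n ℂ) = diagonal w ∧
      (∀ i, 0 ≤ (w i).re) ∧ U⁻¹ * T * U = L ^ 2 := by
  obtain ⟨U, d, hd⟩ := exists_unitaryGroup_star_mul_mul_eq_diagonal (T : Matrix n n ℂ)
  choose w hwd hre using fun i ↦ exists_sq_eq_and_re_nonneg (d i)
  have hd_unitary : ∀ i, d i ∈ unitary ℂ :=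
    diagonal_mem_unitaryGroup_iff.mp (hd ▸ (U⁻¹ * T * U).2)
  have hw_norm : ∀ i, ‖w i‖ = 1 := fun i ↦ by
    have hsq : ‖w i‖ ^ 2 = 1 := by
      rw [← norm_pow, hwd, mem_unitary_iff_norm_eq_one.mp (hd_unitary i)]
    exact (pow_eq_one_iff_of_nonneg (norm_nonneg _) two_ne_zero).mp hsq
  have hw : diagonal w ∈ unitaryGroup n ℂ :=
    diagonal_mem_unitaryGroup_iff.mpr fun i ↦ mem_unitary_iff_norm_eq_one.mpr (hw_norm i)
  refine ⟨U, ⟨diagonal w, hw⟩, w, rfl, hre, Subtype.ext ?_⟩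
  calc star (U : Matrix n n ℂ) * T * U = diagonal d := hd
    _ = diagonal w ^ 2 := by rw [diagonal_pow]; congr; ext i; exact (hwd i).symm

theorem exists_unitaryGroup_star_mul_mul_eq_diagonal_and_star (W X : unitaryGroup n ℂ) :
    ∃ (U V : unitaryGroup n ℂ) (w : n → ℂ), (∀ i, ‖w i‖ = 1) ∧ (∀ i, 0 ≤ (w i).re) ∧
      (star U * W * V : Matrix n n ℂ) = diagonal w ∧
      (star U * X * V : Matrix n n ℂ) = diagonal (star w) := by
  obtain ⟨U, L, w, hL, hre, hU⟩ := exists_unitaryGroup_inv_mul_mul_eq_diagonal_sq (W * X⁻¹)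
  have hW : U⁻¹ * W * (X⁻¹ * U * L⁻¹) = L := by
    calc U⁻¹ * W * (X⁻¹ * U * L⁻¹) = U⁻¹ * (W * X⁻¹) * U * L⁻¹ := by group
      _ = L := by rw [hU]; group
  have hX : U⁻¹ * X * (X⁻¹ * U * L⁻¹) = L⁻¹ := by group
  have hw : ∀ i, ‖w i‖ = 1 := fun i ↦
    mem_unitary_iff_norm_eq_one.mp (diagonal_mem_unitaryGroup_iff.mp (hL ▸ L.2) i)
  refine ⟨U, X⁻¹ * U * L⁻¹, w, hw, hre, ?_, ?_⟩
  · exact (congrArg Subtype.val hW).trans hL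
  · refine (congrArg Subtype.val hX).trans ?_
    rw [← diagonal_conjTranspose, ← hL]
    rfl

theorem exists_unitaryGroup_star_mul_mul_eq_diagonal_re_im {A B : Matrix n n ℂ}
    (hadd : A + Complex.I • B ∈ unitaryGroup n ℂ) (hsub : A - Complex.I • B ∈ unitaryGroup n ℂ) :
    ∃ (U V : unitaryGroup n ℂ) (w : n → ℂ), (∀ i, ‖w i‖ = 1) ∧ (∀ i, 0 ≤ (w i).re) ∧
      (star U * A * V : Matrix n n ℂ) = diagonal (fun i ↦ ((w i).re : ℂ)) ∧
      (star U * B * V : Matrix n n ℂ) = diagonal (fun i ↦ ((w i).im : ℂ)) := by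
  obtain ⟨U, V, w, hw, hre, hW, hX⟩ :=
    exists_unitaryGroup_star_mul_mul_eq_diagonal_and_star ⟨_, hadd⟩ ⟨_, hsub⟩
  have hw_add : diagonal w =
      diagonal (fun i ↦ ((w i).re : ℂ)) + Complex.I • diagonal (fun i ↦ ((w i).im : ℂ)) := by
    rw [← diagonal_smul, diagonal_add]
    congr with i
    apply Complex.ext <;> simp
  have hw_sub : diagonal (star w) =
      diagonal (fun i ↦ ((w i).re : ℂ)) - Complex.I • diagonal (fun i ↦ ((w i).im : ℂ)) := by
    rw [← diagonal_smul, diagonal_sub]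
    congr with i
    apply Complex.ext <;> simp
  rw [hw_add, mul_add, add_mul, Matrix.mul_smul, Matrix.smul_mul] at hW
  rw [hw_sub, mul_sub, sub_mul, Matrix.mul_smul, Matrix.smul_mul] at hX
  have : IsAddTorsionFree (Matrix n n ℂ) := inferInstanceAs (IsAddTorsionFree (n → n → ℂ))
  obtain ⟨hA, hIB⟩ := eq_and_eq_of_add_eq_add_of_sub_eq_sub hW hX
  exact ⟨U, V, w, hw, hre, hA, smul_right_injective _ Complex.I_ne_zero hIB⟩

end SimultaneousDiagonalization

section Blocks

variable {n R : Type*} [Fintype n] [DecidableEq n]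

theorem exists_eq_fromBlocks_of_commute [Ring R] {Q : Matrix (n ⊕ n) (n ⊕ n) R}
    (h : Commute (fromBlocks 0 1 (-1) 0) Q) : ∃ A B, Q = fromBlocks A B (-B) A := by
  rw [← Q.fromBlocks_toBlocks, commute_iff_eq] at h
  simp only [fromBlocks_multiply, fromBlocks_inj, zero_mul, one_mul, mul_zero, mul_one, zero_add,
    add_zero, mul_neg] at h
  obtain ⟨h₂₁, h₂₂, -, -⟩ := h
  refine ⟨Q.toBlocks₁₁, Q.toBlocks₁₂, ?_⟩
  calc Q = fromBlocks Q.toBlocks₁₁ Q.toBlocks₁₂ Q.toBlocks₂₁ Q.toBlocks₂₂ :=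
        Q.fromBlocks_toBlocks.symm
    _ = _ := by rw [h₂₁, h₂₂]

theorem add_smul_mem_unitaryGroup [CommRing R] [StarRing R] {A B : Matrix n n R} {c : R}
    (hstar : star c = -c) (hsq : c * c = -1)
    (h : fromBlocks A B (-B) A ∈ unitaryGroup (n ⊕ n) R) : A + c • B ∈ unitaryGroup n R := by
  rw [mem_unitaryGroup_iff, star_eq_conjTranspose, fromBlocks_conjTranspose, fromBlocks_multiply,
    ← fromBlocks_one, fromBlocks_inj] at h
  obtain ⟨hdiag, hoff, -, -⟩ := h
  rw [conjTranspose_neg, mul_neg, neg_add_eq_zero] at hoff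
  rw [mem_unitaryGroup_iff, star_eq_conjTranspose]
  calc (A + c • B) * (A + c • B)ᴴ
      = A * Aᴴ - (c * c) • (B * Bᴴ) + c • (B * Aᴴ - A * Bᴴ) := by
        simp only [conjTranspose_add, conjTranspose_smul, hstar, add_mul, mul_add,
          Matrix.smul_mul, Matrix.mul_smul, smul_smul, neg_smul, Matrix.mul_neg, smul_sub]
        abel
    _ = 1 := by rw [hsq, hoff, sub_self, smul_zero, add_zero, neg_one_smul, sub_neg_eq_add, hdiag]

end Blocks

theorem symplectic_svd {n : Type*} [Fintype n] [DecidableEq n]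
    (J Q : Matrix (n ⊕ n) (n ⊕ n) ℂ)
    (hJ : J = Matrix.fromBlocks 0 1 (-1) 0)
    (hQu : Qᴴ * Q = 1) (hQs : Qᴴ * J * Q = J) :
    ∃ (U V S D : Matrix n n ℂ),
      Uᴴ * U = 1 ∧ Vᴴ * V = 1 ∧
      (∀ i j : n, i ≠ j → S i j = 0) ∧ (∀ i j : n, i ≠ j → D i j = 0) ∧
      (∀ i j : n, (S i j).im = 0) ∧ (∀ i j : n, (D i j).im = 0) ∧
      (∀ i : n, 0 ≤ (S i i).re ∧ (S i i).re ≤ 1) ∧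
      (∀ i : n, (S i i) ^ 2 + (D i i) ^ 2 = 1) ∧
      Matrix.fromBlocks Uᴴ 0 0 Uᴴ * Q * Matrix.fromBlocks V 0 0 V =
        Matrix.fromBlocks S D (-D) S := by
  subst hJ
  have hQ : Q ∈ unitaryGroup (n ⊕ n) ℂ := mem_unitaryGroup_iff'.mpr hQu
  obtain ⟨A, B, rfl⟩ := exists_eq_fromBlocks_of_commute
    ((commute_unitary_iff_star_left_conjugate hQ).mpr hQs).symm
  have hadd : A + Complex.I • B ∈ unitaryGroup n ℂ :=
    add_smul_mem_unitaryGroup Complex.conj_I Complex.I_mul_I hQ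
  have hsub : A - Complex.I • B ∈ unitaryGroup n ℂ := by
    simpa [sub_eq_add_neg] using add_smul_mem_unitaryGroup (c := -Complex.I) (by simp) (by simp) hQ
  obtain ⟨U, V, w, hw, hre, hA, hB⟩ := exists_unitaryGroup_star_mul_mul_eq_diagonal_re_im hadd hsub
  refine ⟨U, V, diagonal fun i ↦ ((w i).re : ℂ), diagonal fun i ↦ ((w i).im : ℂ),
    mem_unitaryGroup_iff'.mp U.2, mem_unitaryGroup_iff'.mp V.2,
    fun _ _ ↦ diagonal_apply_ne _, fun _ _ ↦ diagonal_apply_ne _,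
    fun i j ↦ ?_, fun i j ↦ ?_, fun i ↦ ?_, fun i ↦ ?_, ?_⟩
  · simp [diagonal_apply, apply_ite]
  · simp [diagonal_apply, apply_ite]
  · simpa using ⟨hre i, hw i ▸ Complex.re_le_norm (w i)⟩
  · have hsq : (w i).re ^ 2 + (w i).im ^ 2 = 1 := by
      rw [← Complex.sq_norm_sub_sq_re, hw i]; ring
    simpa using mod_cast hsq
  · simp [fromBlocks_multiply, ← hA, ← hB, star_eq_conjTranspose]
end

section
/- Let n and p be finite types, A : Matrix n n ℂ and B : Matrix p p ℂ. Then spectrum ℂ ((1 : Matrix p p ℂ) ⊗ₖ A - Bᵀ ⊗ₖ (1 : Matrix n n ℂ)) = { λ - μ | λ ∈ spectrum ℂ A, μ ∈ spectrum ℂ B } (i.e., it equals Set.image2 (· - ·) (spectrum ℂ A) (spectrum ℂ B)). -/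
open Matrix
open scoped Kronecker

/-!
Vectorization turns the matrix into the Sylvester operator `X ↦ A * X - X * B`, so `z` is an
eigenvalue if and only if `A * X = X * (B + z)` for some `X ≠ 0`. Such an `X` intertwines
polynomials in `A` and in `B + z`; by Cayley–Hamilton the characteristic polynomial of `A`
evaluated at `B + z` kills `X`, hence is singular, and one of its linear factors supplies a common
eigenvalue of `A` and `B + z`. Conversely, a right eigenvector `v` of `A` and a left eigenvector
`w` of `B` give the eigenvector `v wᵀ`.
-/

open Polynomial

theorem vecMulVec_ne_zero_of_ne_zero {m n α : Type*} [MulZeroClass α] [NoZeroDivisors α]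
    {v : m → α} {w : n → α} (hv : v ≠ 0) (hw : w ≠ 0) : vecMulVec v w ≠ 0 := by
  obtain ⟨i, hi⟩ := Function.ne_iff.1 hv
  obtain ⟨j, hj⟩ := Function.ne_iff.1 hw
  exact fun h => mul_ne_zero hi hj (congrFun₂ h i j)

section Intertwining

variable {S n p : Type*} [Semiring S] [Fintype n] [DecidableEq n] [Fintype p] [DecidableEq p]
  {A : Matrix n n S} {B : Matrix p p S} {X : Matrix n p S}

theorem pow_mul_eq_mul_pow_of_mul_eq_mul (h : A * X = X * B) (k : ℕ) :
    A ^ k * X = X * B ^ k := by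
  induction k with
  | zero => simp
  | succ k ih => rw [pow_succ, Matrix.mul_assoc, h, ← Matrix.mul_assoc, ih, Matrix.mul_assoc,
      ← pow_succ]

theorem aeval_mul_eq_mul_aeval_of_mul_eq_mul {R : Type*} [CommSemiring R] [Algebra R S]
    (h : A * X = X * B) (q : R[X]) : aeval A q * X = X * aeval B q := by
  induction q using Polynomial.induction_on' with
  | add f g hf hg => rw [map_add, map_add, Matrix.add_mul, Matrix.mul_add, hf, hg]
  | monomial k a =>
    rw [aeval_monomial, aeval_monomial, ← Algebra.smul_def, ← Algebra.smul_def, Matrix.smul_mul,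
      Matrix.mul_smul, pow_mul_eq_mul_pow_of_mul_eq_mul h]

end Intertwining

section CommRing

variable {R n p : Type*} [CommRing R] [Fintype n] [DecidableEq n] [Fintype p] [DecidableEq p]

theorem spectrum_transpose (M : Matrix n n R) : spectrum R Mᵀ = spectrum R M := by
  ext r
  simp only [mem_spectrum_iff_not_isUnit_eval_charpoly, charpoly_transpose]

theorem one_kronecker_sub_transpose_kronecker_one_mulVec_vec
    (A : Matrix n n R) (B : Matrix p p R) (X : Matrix n p R) :
    ((1 : Matrix p p R) ⊗ₖ A - Bᵀ ⊗ₖ (1 : Matrix n n R)) *ᵥ vec X = vec (A * X - X * B) := by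
  rw [sub_mulVec, kronecker_mulVec_vec, kronecker_mulVec_vec, transpose_one, transpose_transpose,
    Matrix.mul_one, Matrix.one_mul, vec_sub]

theorem not_isUnit_aeval_charpoly_of_mul_eq_mul {A : Matrix n n R} {B : Matrix p p R}
    {X : Matrix n p R} (hX : X ≠ 0) (h : A * X = X * B) : ¬ IsUnit (aeval B A.charpoly) := by
  intro hunit
  have hzero : X * aeval B A.charpoly = 0 := by
    rw [← aeval_mul_eq_mul_aeval_of_mul_eq_mul h, aeval_self_charpoly, Matrix.zero_mul]
  obtain ⟨C, hC⟩ := hunit.exists_right_inv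
  exact hX (by rw [← Matrix.mul_one X, ← hC, ← Matrix.mul_assoc, hzero, Matrix.zero_mul])

theorem spectrum_inter_nonempty_of_mul_eq_mul [IsDomain R] {A : Matrix n n R} {B : Matrix p p R}
    {X : Matrix n p R} (hA : A.charpoly.Splits) (hX : X ≠ 0) (h : A * X = X * B) :
    (spectrum R A ∩ spectrum R B).Nonempty := by
  have hsing := not_isUnit_aeval_charpoly_of_mul_eq_mul hX h
  rw [hA.eq_prod_roots_of_monic A.charpoly_monic] at hsing
  obtain ⟨r, hrB, hrA⟩ := spectrum.exists_mem_of_not_isUnit_aeval_prod hsing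
  exact ⟨r, mem_spectrum_of_isRoot_charpoly hrA, hrB⟩

end CommRing

section Field

variable {K n p : Type*} [Field K] [Fintype n] [DecidableEq n] [Fintype p] [DecidableEq p]

theorem mem_spectrum_iff_exists_mulVec_eq_smul {M : Matrix n n K} {r : K} :
    r ∈ spectrum K M ↔ ∃ v ≠ 0, M *ᵥ v = r • v := by
  rw [spectrum.mem_iff, isUnit_iff_isUnit_det, isUnit_iff_ne_zero, not_not,
    ← exists_mulVec_eq_zero_iff]
  simp only [sub_mulVec, Algebra.algebraMap_eq_smul_one, smul_mulVec, one_mulVec, sub_eq_zero,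
    eq_comm]

theorem mem_spectrum_iff_exists_vecMul_eq_smul {M : Matrix n n K} {r : K} :
    r ∈ spectrum K M ↔ ∃ w ≠ 0, w ᵥ* M = r • w := by
  simp only [← spectrum_transpose M, mem_spectrum_iff_exists_mulVec_eq_smul, mulVec_transpose]

theorem mem_spectrum_kronecker_sub_iff_exists_sylvester {A : Matrix n n K} {B : Matrix p p K}
    {z : K} :
    z ∈ spectrum K ((1 : Matrix p p K) ⊗ₖ A - Bᵀ ⊗ₖ (1 : Matrix n n K)) ↔
      ∃ X : Matrix n p K, X ≠ 0 ∧ A * X - X * B = z • X := by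
  simp only [mem_spectrum_iff_exists_mulVec_eq_smul, vec_bijective.surjective.exists,
    one_kronecker_sub_transpose_kronecker_one_mulVec_vec, ← vec_smul, vec_inj, ne_eq,
    vec_eq_zero_iff]

theorem spectrum_kronecker_sub_subset_image2_sub {A : Matrix n n K} (hA : A.charpoly.Splits)
    (B : Matrix p p K) :
    spectrum K ((1 : Matrix p p K) ⊗ₖ A - Bᵀ ⊗ₖ (1 : Matrix n n K)) ⊆
      Set.image2 (· - ·) (spectrum K A) (spectrum K B) := by
  intro z hz
  obtain ⟨X, hX, hXz⟩ := mem_spectrum_kronecker_sub_iff_exists_sylvester.1 hz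
  have hinter : A * X = X * (B + algebraMap K _ z) := by
    rw [Matrix.mul_add, Algebra.algebraMap_eq_smul_one, Matrix.mul_smul, Matrix.mul_one, ← hXz,
      add_sub_cancel]
  obtain ⟨a, haA, haB⟩ := spectrum_inter_nonempty_of_mul_eq_mul hA hX hinter
  rw [← spectrum.add_singleton_eq, Set.add_singleton] at haB
  obtain ⟨b, hb, rfl⟩ := haB
  exact ⟨b + z, haA, b, hb, add_sub_cancel_left b z⟩

theorem image2_sub_subset_spectrum_kronecker_sub (A : Matrix n n K) (B : Matrix p p K) :
    Set.image2 (· - ·) (spectrum K A) (spectrum K B) ⊆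
      spectrum K ((1 : Matrix p p K) ⊗ₖ A - Bᵀ ⊗ₖ (1 : Matrix n n K)) := by
  rintro _ ⟨a, ha, b, hb, rfl⟩
  obtain ⟨v, hv, hva⟩ := mem_spectrum_iff_exists_mulVec_eq_smul.1 ha
  obtain ⟨w, hw, hwb⟩ := mem_spectrum_iff_exists_vecMul_eq_smul.1 hb
  refine mem_spectrum_kronecker_sub_iff_exists_sylvester.2
    ⟨vecMulVec v w, vecMulVec_ne_zero_of_ne_zero hv hw, ?_⟩
  rw [mul_vecMulVec, vecMulVec_mul, hva, hwb, smul_vecMulVec, vecMulVec_smul, sub_smul]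

theorem spectrum_kronecker_sum_diff_general {A : Matrix n n K} (hA : A.charpoly.Splits)
    (B : Matrix p p K) :
    spectrum K ((1 : Matrix p p K) ⊗ₖ A - Bᵀ ⊗ₖ (1 : Matrix n n K))
      = Set.image2 (· - ·) (spectrum K A) (spectrum K B) :=
  (spectrum_kronecker_sub_subset_image2_sub hA B).antisymm
    (image2_sub_subset_spectrum_kronecker_sub A B)

end Field

theorem spectrum_kronecker_sum_diff {n p : Type*}
    [Fintype n] [DecidableEq n] [Fintype p] [DecidableEq p]
    (A : Matrix n n ℂ) (B : Matrix p p ℂ) :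
    spectrum ℂ ((1 : Matrix p p ℂ) ⊗ₖ A - Bᵀ ⊗ₖ (1 : Matrix n n ℂ))
      = Set.image2 (· - ·) (spectrum ℂ A) (spectrum ℂ B) :=
  spectrum_kronecker_sum_diff_general (IsAlgClosed.splits _) B
end

section
/- Let n and p be finite types, A : Matrix n n ℂ and B : Matrix p p ℂ. The Sylvester equation A * X + X * B = K has a unique solution X : Matrix n p ℂ for every right-hand side K : Matrix n p ℂ if and only if A and -B have no common eigenvalue, i.e., (∀ K : Matrix n p ℂ, ∃! X : Matrix n p ℂ, A * X + X * B = K) ↔ spectrum ℂ A ∩ spectrum ℂ (-B) = ∅. -/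
open Matrix

/-!
Substituting `C` for the variable in the entries of the characteristic matrix of `A` turns it into
the block matrix `1 ⊗ₖ C - A ⊗ₖ 1`. Its blocks commute, so its determinant can be taken in two
stages, which gives `det (χ_A(C))`. After vectorization the Sylvester operator `X ↦ A * X + X * B`
is, up to sign and transposition, this block matrix at `C = -B`, so it is bijective exactly when
`χ_A(-B)` is invertible. When `χ_A` splits into linear factors this means that no eigenvalue of `-B`
is a root of `χ_A`.
-/

open Polynomial Kronecker

section BlockMatrix

variable {R n p : Type*} [Fintype n] [DecidableEq n] [Fintype p] [DecidableEq p]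

theorem vec_transpose_vecMul_kronecker_add [CommSemiring R] (A : Matrix n n R)
    (B : Matrix p p R) (X : Matrix n p R) :
    vec Xᵀ ᵥ* (Aᵀ ⊗ₖ 1 + 1 ⊗ₖ B) = vec (A * X + X * B)ᵀ := by
  simp [vecMul_add, vec_vecMul_kronecker]

variable [CommRing R]

theorem comp_charmatrix_map_aeval (A : Matrix n n R) (C : Matrix p p R) :
    comp n n p p R (A.charmatrix.map (aeval C)) = 1 ⊗ₖ C - A ⊗ₖ 1 := by
  ext ⟨i, k⟩ ⟨j, l⟩
  obtain rfl | hij := eq_or_ne i j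
  · simp [comp_apply, Algebra.algebraMap_eq_smul_one]
  · simp [comp_apply, Algebra.algebraMap_eq_smul_one, hij]

theorem det_aeval_charpoly (A : Matrix n n R) (C : Matrix p p R) :
    (aeval C A.charpoly).det = (1 ⊗ₖ C - A ⊗ₖ 1).det := by
  rw [← comp_charmatrix_map_aeval]
  exact det_det A.charmatrix (aeval C).toRingHom

theorem isUnit_aeval_charpoly_iff_isUnit_kronecker (A : Matrix n n R) (C : Matrix p p R) :
    IsUnit (aeval C A.charpoly) ↔ IsUnit (1 ⊗ₖ C - A ⊗ₖ 1) := by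
  rw [isUnit_iff_isUnit_det, det_aeval_charpoly, ← isUnit_iff_isUnit_det]

theorem vecMul_bijective_iff_isUnit {M : Matrix n n R} :
    Function.Bijective M.vecMul ↔ IsUnit M :=
  ⟨fun h ↦ vecMul_surjective_iff_isUnit.mp h.surjective,
    fun h ↦ ⟨vecMul_injective_of_isUnit h, vecMul_surjective_iff_isUnit.mpr h⟩⟩

theorem bijective_mul_add_mul_iff_isUnit_kronecker (A : Matrix n n R) (B : Matrix p p R) :
    Function.Bijective (fun X : Matrix n p R ↦ A * X + X * B) ↔
      IsUnit (Aᵀ ⊗ₖ 1 + 1 ⊗ₖ B) := by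
  have vec_transpose_bijective : Function.Bijective fun X : Matrix n p R ↦ vec Xᵀ :=
    vec_bijective.comp (transposeAddEquiv n p R).bijective
  have intertwine : (Aᵀ ⊗ₖ 1 + 1 ⊗ₖ B).vecMul ∘ (fun X : Matrix n p R ↦ vec Xᵀ) =
      (fun X ↦ vec Xᵀ) ∘ fun X ↦ A * X + X * B :=
    funext (vec_transpose_vecMul_kronecker_add A B)
  rw [← vecMul_bijective_iff_isUnit, ← vec_transpose_bijective.of_comp_iff, intertwine,
    vec_transpose_bijective.of_comp_iff']

theorem bijective_mul_add_mul_iff_isUnit_aeval_charpoly (A : Matrix n n R) (B : Matrix p p R) :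
    Function.Bijective (fun X : Matrix n p R ↦ A * X + X * B) ↔
      IsUnit (aeval (-B) A.charpoly) := by
  have kronecker_sub_eq_neg : (1 ⊗ₖ (-B) - Aᵀ ⊗ₖ 1 : Matrix (n × p) (n × p) R) =
      -(Aᵀ ⊗ₖ 1 + 1 ⊗ₖ B) := by
    ext
    simp only [Matrix.sub_apply, Matrix.neg_apply, Matrix.add_apply, kroneckerMap_apply]
    ring
  rw [← charpoly_transpose, isUnit_aeval_charpoly_iff_isUnit_kronecker,
    kronecker_sub_eq_neg, IsUnit.neg_iff, bijective_mul_add_mul_iff_isUnit_kronecker]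

end BlockMatrix

section Field

variable {𝕜 : Type*} [Field 𝕜]

theorem isUnit_aeval_iff_forall_mem_spectrum_not_isRoot {S : Type*} [Ring S] [Algebra 𝕜 S]
    {f : 𝕜[X]} (hf : f.Splits) (hf₀ : f ≠ 0) (a : S) :
    IsUnit (aeval a f) ↔ ∀ μ ∈ spectrum 𝕜 a, ¬f.IsRoot μ := by
  constructor
  · intro hunit μ hμ hroot
    have zero_mem : (0 : 𝕜) ∈ spectrum 𝕜 (aeval a f) :=
      spectrum.subset_polynomial_aeval a f ⟨μ, hμ, hroot⟩
    exact spectrum.zero_notMem 𝕜 hunit zero_mem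
  · contrapose!
    intro hunit
    have lead_unit : IsUnit (algebraMap 𝕜 S f.leadingCoeff) :=
      (leadingCoeff_ne_zero.mpr hf₀).isUnit.map _
    rw [hf.eq_prod_roots, aeval_mul, aeval_C] at hunit
    exact spectrum.exists_mem_of_not_isUnit_aeval_prod fun h ↦ hunit (lead_unit.mul h)

theorem sylvester_unique_solution_iff_general {n p : Type*}
    [Fintype n] [DecidableEq n] [Fintype p] [DecidableEq p]
    (A : Matrix n n 𝕜) (B : Matrix p p 𝕜) (hA : A.charpoly.Splits) :
    (∀ K : Matrix n p 𝕜, ∃! X : Matrix n p 𝕜, A * X + X * B = K)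
      ↔ spectrum 𝕜 A ∩ spectrum 𝕜 (-B) = ∅ := by
  rw [← Function.bijective_iff_existsUnique, bijective_mul_add_mul_iff_isUnit_aeval_charpoly,
    isUnit_aeval_iff_forall_mem_spectrum_not_isRoot hA A.charpoly_monic.ne_zero,
    ← Set.disjoint_iff_inter_eq_empty, Set.disjoint_right]
  simp_rw [mem_spectrum_iff_isRoot_charpoly (A := A)]

end Field

theorem sylvester_unique_solution_iff {n p : Type*}
    [Fintype n] [DecidableEq n] [Fintype p] [DecidableEq p]
    (A : Matrix n n ℂ) (B : Matrix p p ℂ) :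
    (∀ K : Matrix n p ℂ, ∃! X : Matrix n p ℂ, A * X + X * B = K)
      ↔ spectrum ℂ A ∩ spectrum ℂ (-B) = ∅ :=
  sylvester_unique_solution_iff_general A B (IsAlgClosed.splits _)
end

section
/- Let n be a finite type, A : Matrix n n ℂ stable (every λ ∈ spectrum ℂ A satisfies Re λ < 0), and Q : Matrix n n ℂ positive semidefinite. Then the Lyapunov equation Aᴴ * E + E * A + Q = 0 has a unique solution E : Matrix n n ℂ, and this unique solution is positive semidefinite. -/
open Matrix
open scoped ComplexOrder

open scoped Ring

/-!
In a complex Banach algebra, if `a` and `b` are stable, their Cayley transforms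
`c = (a + 1) (a - 1)⁻¹` and `d = (b + 1) (b - 1)⁻¹` have spectral radius less than `1`.
Multiplying by `(b - 1)⁻¹` on the left and by `(a - 1)⁻¹` on the right turns the continuous-time
equation `b x + x a + q = 0` into the discrete-time equation `x - d x c = p` with
`p = 2 (b - 1)⁻¹ q (a - 1)⁻¹`, whose only solution is the convergent series `∑ dᵏ p cᵏ`. For
`b = a⋆` and `q ≥ 0` every term of this series is nonnegative. Square matrices with the L² operator
norm are an instance.
-/

section Stein

variable {R : Type*}

/-- The Neumann series of `x ↦ b * x * c` applied to `p`, which solves the Stein equation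
`x - b * x * c = p` when it converges and has a junk value otherwise. -/
noncomputable def steinSeries [Semiring R] [TopologicalSpace R] (b c p : R) : R :=
  ∑' k : ℕ, b ^ k * p * c ^ k

lemma steinSeries_star_nonneg [Semiring R] [TopologicalSpace R] [PartialOrder R] [StarRing R]
    [StarOrderedRing R] [OrderClosedTopology R] (c : R) {p : R} (hp : 0 ≤ p) :
    0 ≤ steinSeries (star c) c p :=
  tsum_nonneg fun k => by
    rw [← star_pow]
    exact star_left_conjugate_nonneg hp _

variable [NormedRing R] [NormedAlgebra ℂ R] [CompleteSpace R] {b c : R}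

lemma summable_norm_pow_of_spectralRadius_lt_one (hc : spectralRadius ℂ c < 1) :
    Summable fun k : ℕ => ‖c ^ k‖ := by
  obtain ⟨r, hcr, hr⟩ := ENNReal.lt_iff_exists_nnreal_btwn.mp hc
  have hroot : ∀ᶠ k : ℕ in Filter.atTop, (‖c ^ k‖₊ : ENNReal) ^ (1 / k : ℝ) < r :=
    (spectrum.pow_nnnorm_pow_one_div_tendsto_nhds_spectralRadius c).eventually_lt_const hcr
  refine (summable_geometric_of_lt_one r.coe_nonneg (mod_cast hr)).of_norm_bounded_eventually_nat ?_
  filter_upwards [hroot, Filter.eventually_gt_atTop 0] with k hk hk0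
  have hpow : (‖c ^ k‖₊ : ENNReal) < (r : ENNReal) ^ (k : ℝ) := by
    rwa [one_div, ENNReal.rpow_inv_lt_iff (mod_cast hk0)] at hk
  rw [norm_norm]
  exact_mod_cast hpow.le

lemma summable_pow_mul_mul_pow (hb : spectralRadius ℂ b < 1) (hc : spectralRadius ℂ c < 1) (p : R) :
    Summable fun k : ℕ => b ^ k * p * c ^ k := by
  have hb0 : Filter.Tendsto (fun k : ℕ => b ^ k * p) Filter.atTop (nhds 0) := by
    simpa only [zero_mul] using
      (summable_norm_pow_of_spectralRadius_lt_one hb).of_norm.tendsto_atTop_zero.mul_const p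
  refine summable_of_isBigO_nat (summable_norm_pow_of_spectralRadius_lt_one hc) ?_
  simpa only [one_mul] using
    (hb0.isBigO_one ℝ).mul (Asymptotics.isBigO_refl (fun k : ℕ => c ^ k) Filter.atTop).norm_right

lemma steinSeries_sub_mul_mul (hb : spectralRadius ℂ b < 1) (hc : spectralRadius ℂ c < 1) (p : R) :
    steinSeries b c p - b * steinSeries b c p * c = p := by
  have hsum := summable_pow_mul_mul_pow hb hc p
  rw [sub_eq_iff_eq_add]
  calc steinSeries b c p
      = b ^ 0 * p * c ^ 0 + ∑' k : ℕ, b ^ (k + 1) * p * c ^ (k + 1) := hsum.tsum_eq_zero_add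
    _ = p + ∑' k : ℕ, b * (b ^ k * p * c ^ k) * c := by
        simp only [pow_zero, one_mul, mul_one, pow_succ' b, pow_succ c, mul_assoc]
    _ = p + b * steinSeries b c p * c := by
        rw [(hsum.mul_left b).tsum_mul_right, hsum.tsum_mul_left, steinSeries]

lemma eq_zero_of_eq_mul_mul (hb : spectralRadius ℂ b < 1) (hc : spectralRadius ℂ c < 1) {x : R}
    (hx : x = b * x * c) : x = 0 := by
  have hiter : ∀ k : ℕ, b ^ k * x * c ^ k = x := by
    intro k
    induction k with
    | zero => simp only [pow_zero, one_mul, mul_one]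
    | succ k ih =>
      calc b ^ (k + 1) * x * c ^ (k + 1) = b ^ k * (b * x * c) * c ^ k := by
            simp only [pow_succ b, pow_succ' c, mul_assoc]
        _ = x := by rw [← hx, ih]
  have hlim := (summable_pow_mul_mul_pow hb hc x).tendsto_atTop_zero
  simp only [hiter] at hlim
  exact tendsto_nhds_unique tendsto_const_nhds hlim

theorem sub_mul_mul_eq_iff_eq_steinSeries (hb : spectralRadius ℂ b < 1)
    (hc : spectralRadius ℂ c < 1) {x p : R} : x - b * x * c = p ↔ x = steinSeries b c p := by
  constructor
  · intro hx
    refine sub_eq_zero.mp (eq_zero_of_eq_mul_mul hb hc (sub_eq_zero.mp ?_))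
    calc x - steinSeries b c p - b * (x - steinSeries b c p) * c
        = (x - b * x * c) - (steinSeries b c p - b * steinSeries b c p * c) := by noncomm_ring
      _ = 0 := by rw [hx, steinSeries_sub_mul_mul hb hc, sub_self]
  · rintro rfl
    exact steinSeries_sub_mul_mul hb hc p

end Stein

lemma commute_ringInverse_right {M : Type*} [MonoidWithZero M] {a b : M} (h : Commute a b) :
    Commute a b⁻¹ʳ := by
  by_cases hb : IsUnit b
  · obtain ⟨u, rfl⟩ := hb
    rw [Ring.inverse_unit]
    exact h.units_inv_right
  · rw [Ring.inverse_non_unit b hb]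
    exact Commute.zero_right a

section CayleyTransform

variable {R : Type*} [Ring R]

/-- The Cayley transform `(a + 1) (a - 1)⁻¹`, which maps the open left half-plane to the open unit
disc. It is meaningful only if `a - 1` is a unit, since `⁻¹ʳ` is `0` on nonunits. -/
noncomputable def cayleyTransform (a : R) : R :=
  (a + 1) * (a - 1)⁻¹ʳ

variable {a b : R}

lemma cayleyTransform_mul_sub_one (ha : IsUnit (a - 1)) : cayleyTransform a * (a - 1) = a + 1 :=
  Ring.inverse_mul_cancel_right _ _ ha

lemma commute_add_one_inverse_sub_one (a : R) : Commute (a + 1) (a - 1)⁻¹ʳ := by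
  refine commute_ringInverse_right ?_
  exact ((Commute.refl a).sub_right (.one_right a)).add_left (.one_left _)

lemma sub_one_mul_cayleyTransform (ha : IsUnit (a - 1)) : (a - 1) * cayleyTransform a = a + 1 := by
  rw [cayleyTransform, (commute_add_one_inverse_sub_one a).eq, Ring.mul_inverse_cancel_left _ _ ha]

lemma star_cayleyTransform [StarRing R] (a : R) :
    star (cayleyTransform a) = cayleyTransform (star a) := by
  rw [cayleyTransform, (commute_add_one_inverse_sub_one a).eq, star_mul, star_add, star_one,
    ← Ring.inverse_star, star_sub, star_one, cayleyTransform]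

lemma sub_one_mul_sub_cayleyTransform_mul_sub_one (hb : IsUnit (b - 1)) (ha : IsUnit (a - 1))
    (x : R) :
    (b - 1) * (x - cayleyTransform b * x * cayleyTransform a) * (a - 1)
      = -(2 • (b * x + x * a)) :=
  calc (b - 1) * (x - cayleyTransform b * x * cayleyTransform a) * (a - 1)
      = (b - 1) * x * (a - 1)
          - (b - 1) * cayleyTransform b * x * (cayleyTransform a * (a - 1)) := by noncomm_ring
    _ = (b - 1) * x * (a - 1) - (b + 1) * x * (a + 1) := by
        rw [sub_one_mul_cayleyTransform hb, cayleyTransform_mul_sub_one ha]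
    _ = -(2 • (b * x + x * a)) := by noncomm_ring

theorem sylvester_iff_stein_cayleyTransform [IsAddTorsionFree R] (hb : IsUnit (b - 1))
    (ha : IsUnit (a - 1)) {x q : R} :
    b * x + x * a + q = 0 ↔
      x - cayleyTransform b * x * cayleyTransform a = 2 • ((b - 1)⁻¹ʳ * q * (a - 1)⁻¹ʳ) := by
  have hq : (b - 1) * (2 • ((b - 1)⁻¹ʳ * q * (a - 1)⁻¹ʳ)) * (a - 1) = 2 • q := by
    rw [mul_smul_comm, smul_mul_assoc, mul_assoc (b - 1)⁻¹ʳ, Ring.mul_inverse_cancel_left _ _ hb,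
      Ring.inverse_mul_cancel_right _ _ ha]
  symm
  rw [← hb.mul_right_inj, ← ha.mul_left_inj, hq,
    sub_one_mul_sub_cayleyTransform_mul_sub_one hb ha, ← smul_neg,
    (nsmul_right_injective two_ne_zero).eq_iff, neg_eq_iff_add_eq_zero]

end CayleyTransform

lemma re_add_one_div_sub_one_nonneg {z : ℂ} (hz : 1 ≤ ‖z‖) : 0 ≤ ((z + 1) / (z - 1)).re := by
  have hre : ((z + 1) / (z - 1)).re = (Complex.normSq z - 1) / Complex.normSq (z - 1) := by
    simp only [Complex.div_re, ← add_div, Complex.normSq_apply, Complex.add_re, Complex.add_im,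
      Complex.sub_re, Complex.sub_im, Complex.one_re, Complex.one_im]
    ring
  have hnorm : 1 ≤ Complex.normSq z := by
    rw [Complex.normSq_eq_norm_sq]
    exact one_le_pow₀ hz
  rw [hre]
  exact div_nonneg (sub_nonneg.mpr hnorm) (Complex.normSq_nonneg _)

/-- Stability in the sense of continuous-time linear systems: the spectrum lies in the open left
half-plane. -/
def IsStable {R : Type*} [Ring R] [Algebra ℂ R] (a : R) : Prop :=
  ∀ z ∈ spectrum ℂ a, z.re < 0

namespace IsStable

section Algebra

variable {R : Type*} [Ring R] [Algebra ℂ R] {a : R}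

protected lemma star [StarRing R] [StarModule ℂ R] (ha : IsStable a) : IsStable (star a) := by
  intro z hz
  rw [spectrum.map_star, Set.mem_star] at hz
  simpa only [RCLike.star_def, Complex.conj_re] using ha (star z) hz

lemma isUnit_sub_algebraMap (ha : IsStable a) {z : ℂ} (hz : 0 ≤ z.re) :
    IsUnit (a - algebraMap ℂ R z) := by
  by_contra hunit
  exact (ha z (by rwa [spectrum.mem_iff, IsUnit.sub_iff])).not_ge hz

lemma isUnit_sub_one (ha : IsStable a) : IsUnit (a - 1) := by
  simpa only [map_one] using ha.isUnit_sub_algebraMap (z := 1) (by norm_num)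

lemma isUnit_sub_one_smul_sub_add_one_smul (ha : IsStable a) {z : ℂ} (hz : 1 ≤ ‖z‖) :
    IsUnit ((z - 1) • a - (z + 1) • (1 : R)) := by
  rcases eq_or_ne z 1 with rfl | hz1
  · have hconst : ((1 : ℂ) - 1) • a - ((1 : ℂ) + 1) • (1 : R) = algebraMap ℂ R (-2) := by
      rw [Algebra.algebraMap_eq_smul_one]
      module
    rw [hconst]
    exact (IsUnit.mk0 (-2 : ℂ) (by norm_num)).map _
  · have hz0 : z - 1 ≠ 0 := sub_ne_zero.mpr hz1
    have hfactor : (z - 1) • a - (z + 1) • (1 : R)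
        = (z - 1) • (a - algebraMap ℂ R ((z + 1) / (z - 1))) := by
      rw [smul_sub, Algebra.algebraMap_eq_smul_one, smul_smul, mul_div_cancel₀ _ hz0]
    rw [hfactor]
    exact (ha.isUnit_sub_algebraMap (re_add_one_div_sub_one_nonneg hz)).smul (Units.mk0 _ hz0)

lemma norm_lt_one_of_mem_spectrum_cayleyTransform (ha : IsStable a) {z : ℂ}
    (hz : z ∈ spectrum ℂ (cayleyTransform a)) : ‖z‖ < 1 := by
  by_contra! hnorm
  have hmul : (algebraMap ℂ R z - cayleyTransform a) * (a - 1)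
      = (z - 1) • a - (z + 1) • (1 : R) := by
    rw [sub_mul, cayleyTransform_mul_sub_one ha.isUnit_sub_one, ← Algebra.smul_def]
    module
  refine hz (ha.isUnit_sub_one.mul_right_iff.mp ?_)
  rw [hmul]
  exact ha.isUnit_sub_one_smul_sub_add_one_smul hnorm

end Algebra

lemma spectralRadius_cayleyTransform_lt_one {R : Type*} [NormedRing R] [NormedAlgebra ℂ R]
    [CompleteSpace R] {a : R} (ha : IsStable a) : spectralRadius ℂ (cayleyTransform a) < 1 := by
  rcases subsingleton_or_nontrivial R with _ | _
  · simp only [Subsingleton.elim (cayleyTransform a) 0, spectrum.spectralRadius_zero, zero_lt_one]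
  · exact spectrum.spectralRadius_lt_of_forall_lt (r := 1) _ fun z hz =>
      mod_cast ha.norm_lt_one_of_mem_spectrum_cayleyTransform hz

end IsStable

theorem sylvester_iff_eq_steinSeries {R : Type*} [NormedRing R] [NormedAlgebra ℂ R]
    [CompleteSpace R] {a b : R} (hb : IsStable b) (ha : IsStable a) {x q : R} :
    b * x + x * a + q = 0 ↔
      x = steinSeries (cayleyTransform b) (cayleyTransform a)
        (2 • ((b - 1)⁻¹ʳ * q * (a - 1)⁻¹ʳ)) := by
  have : IsAddTorsionFree R := .of_isTorsionFree ℂ R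
  rw [sylvester_iff_stein_cayleyTransform hb.isUnit_sub_one ha.isUnit_sub_one,
    sub_mul_mul_eq_iff_eq_steinSeries hb.spectralRadius_cayleyTransform_lt_one
      ha.spectralRadius_cayleyTransform_lt_one]

theorem lyapunov_unique_possemidef_solution_general {R : Type*} [NormedRing R] [NormedAlgebra ℂ R]
    [CompleteSpace R] [PartialOrder R] [StarRing R] [StarModule ℂ R] [StarOrderedRing R]
    [OrderClosedTopology R] {a q : R} (ha : IsStable a) (hq : 0 ≤ q) :
    ∃ x : R, 0 ≤ x ∧ star a * x + x * a + q = 0 ∧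
      ∀ y : R, star a * y + y * a + q = 0 → y = x := by
  refine ⟨_, ?_, (sylvester_iff_eq_steinSeries ha.star ha).mpr rfl,
    fun y => (sylvester_iff_eq_steinSeries ha.star ha).mp⟩
  have hconj : 0 ≤ (star a - 1)⁻¹ʳ * q * (a - 1)⁻¹ʳ := by
    simpa only [← Ring.inverse_star, star_sub, star_one] using
      star_left_conjugate_nonneg hq (a - 1)⁻¹ʳ
  rw [← star_cayleyTransform]
  exact steinSeries_star_nonneg _ (nsmul_nonneg hconj 2)

theorem lyapunov_unique_possemidef_solution {n : Type*} [Fintype n] [DecidableEq n]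
    (A Q : Matrix n n ℂ)
    (hA : ∀ lam ∈ spectrum ℂ A, lam.re < 0)
    (hQ : Q.PosSemidef) :
    ∃ E : Matrix n n ℂ, E.PosSemidef ∧ Aᴴ * E + E * A + Q = 0 ∧
      ∀ F : Matrix n n ℂ, Aᴴ * F + F * A + Q = 0 → F = E := by
  open scoped MatrixOrder Matrix.Norms.L2Operator in
  simpa only [nonneg_iff_posSemidef, star_eq_conjTranspose] using
    lyapunov_unique_possemidef_solution_general hA hQ.nonneg
end

section
/- Let n, m, p be finite types, γ > 0 a real number, A : Matrix n n ℂ stable (every λ ∈ spectrum ℂ A satisfies Re λ < 0), B : Matrix n m ℂ, C : Matrix p n ℂ, D : Matrix p m ℂ. Let G(s) = D + C * (s • (1 : Matrix n n ℂ) - A)⁻¹ * B for s ∈ ℂ, let R = (γ^2 : ℂ) • (1 : Matrix m m ℂ) - Dᴴ * D, and let M_γ : Matrix (n ⊕ n) (n ⊕ n) ℂ be the Hamiltonian matrix M_γ = Matrix.fromBlocks (A + B * R⁻¹ * Dᴴ * C) (B * R⁻¹ * Bᴴ) (-(Cᴴ * (1 + D * R⁻¹ * Dᴴ) * C)) (-(A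 + B * R⁻¹ * Dᴴ * C)ᴴ). Then (⨆ ω : ℝ, ‖G(Complex.I * ω)‖) < γ if and only if ‖D‖ < γ and M_γ has no purely imaginary eigenvalue (for every ω : ℝ, Complex.I * ω ∉ spectrum ℂ M_γ). Here ‖·‖ denotes the ℓ²→ℓ² operator norm of a complex matrix (i.e., its largest singular value); note that the hypothesis ‖D‖ < γ makes R invertible, and stability of A makes s • 1 - A invertible for purely imaginary s and the supremum finite. -/
open Matrix
open scoped Matrix.Norms.L2Operator

open Filter Topology Bornology

/-!
On the imaginary axis `γ² - G(s)ᴴ G(s)` is itself the value of a transfer function, with state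
matrix `F = [A, 0; -CᴴC, -Aᴴ]` and direct feedthrough `R = γ² - DᴴD`. A transfer function with
invertible feedthrough is singular at `s` exactly when `s` is an eigenvalue of the state matrix of
its inverse system, which here is the Hamiltonian matrix. Hence `iω` is an eigenvalue of the
Hamiltonian matrix if and only if `γ` is a singular value of `G(iω)`. Since `‖G(iω)‖` is continuous
in `ω` and tends to `‖D‖` at infinity, it stays below `γ > ‖D‖` as soon as it never equals `γ`, and
its supremum is then either attained or at most `‖D‖`.
-/

section LimitAtInfinity

variable {X α : Type*} [TopologicalSpace X] [NoncompactSpace X] [TopologicalSpace α]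
  {f : X → α} {d c : α}

theorem iSup_lt_iff_of_tendsto_cocompact [ConditionallyCompleteLinearOrder α] [OrderTopology α]
    (hf : Continuous f) (hd : Tendsto f (cocompact X) (𝓝 d)) :
    (⨆ x, f x) < c ↔ d < c ∧ ∀ x, f x < c := by
  have : Nonempty X := (cocompact X).nonempty_of_neBot
  have le_or_attained : (∀ x, f x ≤ d) ∨ ∃ x, ∀ y, f y ≤ f x := by
    refine or_iff_not_imp_left.mpr fun h => ?_
    obtain ⟨x₀, hx₀⟩ := not_forall.mp h
    exact hf.exists_forall_ge' x₀ (hd.eventually_le_const (not_le.mp hx₀))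
  constructor
  · intro h
    have hbdd : BddAbove (Set.range f) := by
      rcases le_or_attained with hle | ⟨x, hx⟩
      · exact ⟨d, Set.forall_mem_range.mpr hle⟩
      · exact ⟨f x, Set.forall_mem_range.mpr hx⟩
    exact ⟨(le_of_tendsto' hd (le_ciSup hbdd)).trans_lt h, fun x => (le_ciSup hbdd x).trans_lt h⟩
  · rintro ⟨hdc, hlt⟩
    rcases le_or_attained with hle | ⟨x, hx⟩
    · exact (ciSup_le hle).trans_lt hdc
    · exact (ciSup_le hx).trans_lt (hlt x)

theorem forall_lt_of_forall_ne_of_tendsto_cocompact [PreconnectedSpace X] [LinearOrder α]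
    [OrderClosedTopology α] (hf : Continuous f) (hd : Tendsto f (cocompact X) (𝓝 d))
    (hdc : d < c) (hne : ∀ x, f x ≠ c) (x : X) : f x < c := by
  by_contra! hx
  obtain ⟨y, hy⟩ := (hd.eventually_lt_const hdc).exists
  obtain ⟨z, hz⟩ := mem_range_of_exists_le_of_exists_ge hf ⟨y, hy.le⟩ ⟨x, hx⟩
  exact hne z hz

end LimitAtInfinity

section SingularValues

variable {m p : Type*} [Fintype m] [DecidableEq m] [Fintype p]

theorem sq_notMem_spectrum_conjTranspose_mul_self_of_norm_lt {𝕜 : Type*} [RCLike 𝕜]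
    {G : Matrix p m 𝕜} {γ : ℝ} (h : ‖G‖ < γ) : (γ ^ 2 : 𝕜) ∉ spectrum 𝕜 (Gᴴ * G) := by
  cases isEmpty_or_nonempty m
  · simp [spectrum.of_subsingleton]
  intro hmem
  have hle := spectrum.norm_le_norm_of_mem hmem
  rw [l2_opNorm_conjTranspose_mul_self, norm_pow, RCLike.norm_ofReal, sq_abs] at hle
  nlinarith [norm_nonneg G]

open scoped MatrixOrder ComplexOrder in
theorem norm_sq_mem_spectrum_conjTranspose_mul_self [Nonempty m] (G : Matrix p m ℂ) :
    (‖G‖ ^ 2 : ℂ) ∈ spectrum ℂ (Gᴴ * G) := by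
  have h := spectrum.algebraMap_mem ℂ <| CStarAlgebra.norm_mem_spectrum_of_nonneg
    (a := Gᴴ * G) (posSemidef_conjTranspose_mul_self G).nonneg
  simpa [l2_opNorm_conjTranspose_mul_self, sq] using h

theorem norm_ne_of_sq_notMem_spectrum_conjTranspose_mul_self {G : Matrix p m ℂ} {γ : ℝ}
    (hγ : 0 < γ) (h : (γ ^ 2 : ℂ) ∉ spectrum ℂ (Gᴴ * G)) : ‖G‖ ≠ γ := by
  rintro rfl
  cases isEmpty_or_nonempty m
  · simp [Subsingleton.elim G 0] at hγ
  · exact h (norm_sq_mem_spectrum_conjTranspose_mul_self G)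

end SingularValues

section LinearSystem

variable {n m p : Type*}

section Realization

variable [Fintype n] [DecidableEq n] {K : Type*} [CommRing K]

theorem notMem_spectrum_iff_isUnit_smul_one_sub {s : K} {A : Matrix n n K} :
    s ∉ spectrum K A ↔ IsUnit (s • (1 : Matrix n n K) - A) := by
  rw [spectrum.notMem_iff, Algebra.algebraMap_eq_smul_one]

/-- The transfer function `G(s) = D + C (sI - A)⁻¹ B` of the system `x' = A x + B u`,
`y = C x + D u`. At an eigenvalue `s` of `A` the matrix inverse is `0`, so that `G(s) = D`. -/
noncomputable def transferFunction (A : Matrix n n K) (B : Matrix n m K) (C : Matrix p n K)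
    (D : Matrix p m K) (s : K) : Matrix p m K :=
  D + C * (s • (1 : Matrix n n K) - A)⁻¹ * B

variable [Fintype m] [DecidableEq m]

/-- The two sides are the Schur complements of the diagonal blocks of `[sI - A, B; -C, D]`. -/
theorem isUnit_transferFunction_iff {A : Matrix n n K} {B : Matrix n m K} {C : Matrix m n K}
    {D : Matrix m m K} {s : K} (hs : s ∉ spectrum K A) (hD : IsUnit D) :
    IsUnit (transferFunction A B C D s) ↔ s ∉ spectrum K (A - B * D⁻¹ * C) := by
  rw [notMem_spectrum_iff_isUnit_smul_one_sub] at hs ⊢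
  obtain ⟨_⟩ := hs.nonempty_invertible
  obtain ⟨_⟩ := hD.nonempty_invertible
  have schur₁ := isUnit_fromBlocks_iff_of_invertible₁₁ (A := s • 1 - A) (B := B) (C := -C) (D := D)
  have schur₂ := isUnit_fromBlocks_iff_of_invertible₂₂ (A := s • 1 - A) (B := B) (C := -C) (D := D)
  rw [invOf_eq_nonsing_inv, Matrix.neg_mul, Matrix.neg_mul, sub_neg_eq_add] at schur₁
  rw [invOf_eq_nonsing_inv, Matrix.mul_neg, sub_neg_eq_add] at schur₂
  rw [transferFunction, ← schur₁, schur₂, sub_sub_eq_add_sub, add_sub_right_comm]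

end Realization

section Hamiltonian

variable {K : Type*} [CommRing K] [StarRing K] [Fintype p]

/-- The state matrix `F` of the cascade of the system `(A, B, C, D)` and its para-Hermitian
conjugate `G~(s) = Dᴴ - Bᴴ (sI + Aᴴ)⁻¹ Cᴴ`, used to realize `c - G~(s) G(s)`. -/
def cascadeStateMatrix (A : Matrix n n K) (C : Matrix p n K) : Matrix (n ⊕ n) (n ⊕ n) K :=
  fromBlocks A 0 (-(Cᴴ * C)) (-Aᴴ)

/-- The Hamiltonian matrix `M_γ` of the system `(A, B, C, D)`, with `c` in the role of `γ²`. If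
`R` is singular, the matrix inverse `R⁻¹` is `0`. -/
noncomputable def hamiltonianMatrix [Fintype m] [DecidableEq m] [DecidableEq p] (c : K)
    (A : Matrix n n K) (B : Matrix n m K) (C : Matrix p n K) (D : Matrix p m K) :
    Matrix (n ⊕ n) (n ⊕ n) K :=
  let R : Matrix m m K := c • (1 : Matrix m m K) - Dᴴ * D
  fromBlocks (A + B * R⁻¹ * Dᴴ * C) (B * R⁻¹ * Bᴴ)
    (-(Cᴴ * (1 + D * R⁻¹ * Dᴴ) * C)) (-(A + B * R⁻¹ * Dᴴ * C)ᴴ)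

theorem hamiltonianMatrix_eq_cascadeStateMatrix_sub [Fintype m] [DecidableEq m] [DecidableEq p]
    {c : K} (hc : star c = c) (A : Matrix n n K) (B : Matrix n m K) (C : Matrix p n K)
    (D : Matrix p m K) :
    hamiltonianMatrix c A B C D = cascadeStateMatrix A C -
      fromRows B (-(Cᴴ * D)) * (c • (1 : Matrix m m K) - Dᴴ * D)⁻¹ * -fromCols (Dᴴ * C) Bᴴ := by
  have hR : (c • (1 : Matrix m m K) - Dᴴ * D)⁻¹ᴴ = (c • (1 : Matrix m m K) - Dᴴ * D)⁻¹ := by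
    simp [conjTranspose_nonsing_inv, conjTranspose_smul, hc]
  rw [hamiltonianMatrix, cascadeStateMatrix, Matrix.mul_neg, sub_neg_eq_add, fromRows_mul,
    fromRows_mul_fromCols, fromBlocks_add]
  simp only [conjTranspose_add, conjTranspose_mul, Matrix.mul_add, Matrix.add_mul, Matrix.mul_one,
    Matrix.mul_assoc, Matrix.neg_mul, zero_add, neg_add, hR, conjTranspose_conjTranspose]

variable [DecidableEq n]

theorem smul_one_sub_cascadeStateMatrix {A : Matrix n n K} (C : Matrix p n K) {s : K}
    (hs : star s = -s) :
    s • 1 - cascadeStateMatrix A C =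
      fromBlocks (s • 1 - A) 0 (Cᴴ * C) (-(s • (1 : Matrix n n K) - A)ᴴ) := by
  rw [cascadeStateMatrix, ← fromBlocks_one, fromBlocks_smul, sub_eq_add_neg, fromBlocks_neg,
    fromBlocks_add]
  simp [conjTranspose_smul, hs, sub_eq_add_neg, add_comm]

variable [Fintype n]

theorem notMem_spectrum_cascadeStateMatrix {A : Matrix n n K} (C : Matrix p n K) {s : K}
    (hs : star s = -s) (hA : s ∉ spectrum K A) : s ∉ spectrum K (cascadeStateMatrix A C) := by
  rw [notMem_spectrum_iff_isUnit_smul_one_sub] at hA ⊢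
  rw [smul_one_sub_cascadeStateMatrix C hs, isUnit_fromBlocks_zero₁₂]
  exact ⟨hA, ((isUnit_conjTranspose _).mpr hA).neg⟩

theorem inv_smul_one_sub_cascadeStateMatrix {A : Matrix n n K} (C : Matrix p n K) {s : K}
    (hs : star s = -s) (hA : s ∉ spectrum K A) :
    (s • 1 - cascadeStateMatrix A C)⁻¹ = fromBlocks (s • 1 - A)⁻¹ 0
      ((s • 1 - A)⁻¹ᴴ * (Cᴴ * C) * (s • 1 - A)⁻¹) (-(s • (1 : Matrix n n K) - A)⁻¹ᴴ) := by
  rw [notMem_spectrum_iff_isUnit_smul_one_sub] at hA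
  have inv_neg_conjTranspose :
      (-(s • (1 : Matrix n n K) - A)ᴴ)⁻¹ = -(s • (1 : Matrix n n K) - A)⁻¹ᴴ :=
    inv_eq_right_inv <| by
      rw [neg_mul_neg, ← conjTranspose_mul,
        nonsing_inv_mul _ ((isUnit_iff_isUnit_det _).mp hA), conjTranspose_one]
  rw [smul_one_sub_cascadeStateMatrix C hs, inv_fromBlocks_zero₁₂_of_isUnit_iff _ _ _
    (iff_of_true hA ((isUnit_conjTranspose _).mpr hA).neg), inv_neg_conjTranspose]
  simp only [Matrix.neg_mul, neg_neg]

variable [DecidableEq m]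

theorem transferFunction_cascadeStateMatrix {A : Matrix n n K} (B : Matrix n m K)
    (C : Matrix p n K) (D : Matrix p m K) (c : K) {s : K} (hs : star s = -s)
    (hA : s ∉ spectrum K A) :
    transferFunction (cascadeStateMatrix A C) (fromRows B (-(Cᴴ * D)))
        (-fromCols (Dᴴ * C) Bᴴ) (c • (1 : Matrix m m K) - Dᴴ * D) s =
      c • (1 : Matrix m m K) - (transferFunction A B C D s)ᴴ * transferFunction A B C D s := by
  simp only [transferFunction]
  rw [inv_smul_one_sub_cascadeStateMatrix C hs hA, Matrix.neg_mul, fromCols_mul_fromBlocks,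
    Matrix.neg_mul, fromCols_mul_fromRows]
  simp only [conjTranspose_add, conjTranspose_mul, Matrix.mul_add, Matrix.add_mul,
    Matrix.mul_assoc, Matrix.mul_neg, Matrix.neg_mul, Matrix.mul_zero, zero_add, neg_neg]
  abel

theorem mem_spectrum_hamiltonianMatrix_iff [Fintype m] [DecidableEq p] {A : Matrix n n K}
    {B : Matrix n m K} {C : Matrix p n K} {D : Matrix p m K} {c s : K} (hc : star c = c)
    (hs : star s = -s) (hA : s ∉ spectrum K A) (hD : c ∉ spectrum K (Dᴴ * D)) :
    s ∈ spectrum K (hamiltonianMatrix c A B C D) ↔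
      c ∈ spectrum K ((transferFunction A B C D s)ᴴ * transferFunction A B C D s) := by
  rw [← not_iff_not, hamiltonianMatrix_eq_cascadeStateMatrix_sub hc,
    ← isUnit_transferFunction_iff (notMem_spectrum_cascadeStateMatrix C hs hA)
      (notMem_spectrum_iff_isUnit_smul_one_sub.mp hD),
    transferFunction_cascadeStateMatrix B C D c hs hA, notMem_spectrum_iff_isUnit_smul_one_sub]

end Hamiltonian

section FrequencyResponse

variable [Fintype n] [DecidableEq n]

section RCLike

variable {𝕜 : Type*} [RCLike 𝕜]

theorem transferFunction_eq_resolvent (A : Matrix n n 𝕜) (B : Matrix n m 𝕜) (C : Matrix p n 𝕜)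
    (D : Matrix p m 𝕜) (s : 𝕜) : transferFunction A B C D s = D + C * resolvent A s * B := by
  rw [transferFunction, nonsing_inv_eq_ringInverse, resolvent, Algebra.algebraMap_eq_smul_one]

theorem continuousAt_transferFunction {A : Matrix n n 𝕜} {s : 𝕜} (hs : s ∉ spectrum 𝕜 A)
    (B : Matrix n m 𝕜) (C : Matrix p n 𝕜) (D : Matrix p m 𝕜) :
    ContinuousAt (transferFunction A B C D) s := by
  have hres : ContinuousAt (resolvent A) s :=
    (spectrum.hasDerivAt_resolvent_const_left (not_not.mp hs)).continuousAt
  rw [funext (transferFunction_eq_resolvent A B C D)]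
  fun_prop

theorem tendsto_transferFunction_cobounded (A : Matrix n n 𝕜) (B : Matrix n m 𝕜)
    (C : Matrix p n 𝕜) (D : Matrix p m 𝕜) :
    Tendsto (transferFunction A B C D) (cobounded 𝕜) (𝓝 D) := by
  have hcont : Continuous fun X : Matrix n n 𝕜 => D + C * X * B := by fun_prop
  rw [funext (transferFunction_eq_resolvent A B C D)]
  simpa [Function.comp_def] using
    (hcont.tendsto 0).comp (spectrum.resolvent_tendsto_cobounded (𝕜 := 𝕜) A)

end RCLike

theorem tendsto_I_mul_ofReal_cocompact :
    Tendsto (fun ω : ℝ => Complex.I * (ω : ℂ)) (cocompact ℝ) (cobounded ℂ) := by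
  rw [← Metric.cobounded_eq_cocompact, ← tendsto_norm_atTop_iff_cobounded]
  exact tendsto_norm_cobounded_atTop.congr fun ω => by simp

/-- The case of an `A` that may be unstable: the supremum is then the `L∞` norm of the transfer
function on the imaginary axis. -/
theorem hinf_norm_lt_iff_hamiltonian_general [Fintype m] [DecidableEq m] [Fintype p] [DecidableEq p]
    (γ : ℝ) {A : Matrix n n ℂ} (hA : ∀ ω : ℝ, Complex.I * (ω : ℂ) ∉ spectrum ℂ A)
    (B : Matrix n m ℂ) (C : Matrix p n ℂ) (D : Matrix p m ℂ) :
    (⨆ ω : ℝ, ‖transferFunction A B C D (Complex.I * (ω : ℂ))‖) < γ ↔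
      ‖D‖ < γ ∧
        ∀ ω : ℝ, Complex.I * (ω : ℂ) ∉ spectrum ℂ (hamiltonianMatrix (γ ^ 2 : ℂ) A B C D) := by
  have hcont : Continuous fun ω : ℝ => ‖transferFunction A B C D (Complex.I * (ω : ℂ))‖ :=
    continuous_iff_continuousAt.mpr fun ω =>
      ((continuousAt_transferFunction (hA ω) B C D).comp (f := fun ω : ℝ => Complex.I * (ω : ℂ))
        (by fun_prop)).norm
  have hlim : Tendsto (fun ω : ℝ => ‖transferFunction A B C D (Complex.I * (ω : ℂ))‖)
      (cocompact ℝ) (𝓝 ‖D‖) :=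
    ((tendsto_transferFunction_cobounded A B C D).comp tendsto_I_mul_ofReal_cocompact).norm
  rw [iSup_lt_iff_of_tendsto_cocompact hcont hlim]
  refine and_congr_right fun hD => ?_
  have singular_iff (ω : ℝ) := mem_spectrum_hamiltonianMatrix_iff (B := B) (C := C)
    (c := (γ ^ 2 : ℂ)) (by simp) (by simp) (hA ω)
    (sq_notMem_spectrum_conjTranspose_mul_self_of_norm_lt hD)
  simp only [singular_iff]
  refine ⟨fun hlt ω => sq_notMem_spectrum_conjTranspose_mul_self_of_norm_lt (hlt ω), fun hne => ?_⟩
  exact forall_lt_of_forall_ne_of_tendsto_cocompact hcont hlim hD fun ω =>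
    norm_ne_of_sq_notMem_spectrum_conjTranspose_mul_self ((norm_nonneg D).trans_lt hD) (hne ω)

end FrequencyResponse

end LinearSystem

theorem hinf_norm_lt_iff_hamiltonian {n m p : Type*}
    [Fintype n] [DecidableEq n] [Fintype m] [DecidableEq m] [Fintype p] [DecidableEq p]
    (γ : ℝ) (hγ : 0 < γ)
    (A : Matrix n n ℂ) (hA : ∀ lam ∈ spectrum ℂ A, lam.re < 0)
    (B : Matrix n m ℂ) (C : Matrix p n ℂ) (D : Matrix p m ℂ) :
    let R : Matrix m m ℂ := (γ ^ 2 : ℂ) • (1 : Matrix m m ℂ) - Dᴴ * D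
    let Mγ : Matrix (n ⊕ n) (n ⊕ n) ℂ :=
      Matrix.fromBlocks (A + B * R⁻¹ * Dᴴ * C) (B * R⁻¹ * Bᴴ)
        (-(Cᴴ * (1 + D * R⁻¹ * Dᴴ) * C)) (-(A + B * R⁻¹ * Dᴴ * C)ᴴ)
    ((⨆ ω : ℝ, ‖D + C * ((Complex.I * (ω : ℂ)) • (1 : Matrix n n ℂ) - A)⁻¹ * B‖) < γ
      ↔ ‖D‖ < γ ∧ ∀ ω : ℝ, (Complex.I * (ω : ℂ)) ∉ spectrum ℂ Mγ) :=
  hinf_norm_lt_iff_hamiltonian_general γ (fun ω h => by simpa using hA _ h) B C D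
end
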